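/- arXiv:2209.07014 — 10 statements merged into one kernel-verified Lean document; each statement's English description precedes it below -/
import Mathlib

section
/- Suppose Υ_k is positive definite for every k ∈ {0,…,N}. Then for every initial state x_0, every disturbance sequence (d_k) and every control sequence (u_k), the cost satisfies the completion-of-squares identity J_N = x_0'P_0 x_0 + 2 x_0'f_0 + r'P_{N+1} r + Σ_{k=0}^N [ r'Q r + d_k'E'R E d_k − h_k'Υ_k^{-1} h_k + d_k'E'P_{k+1} E d_k + 2 d_k'E'f_{k+1} + (u_k + Υ_k^{-1}M_k x_k + Υ_k^{-1}h_k)'Υ_k (u_k + Υ_k^{-1}M_k x_k + Υ_k^{-1}h_k) ]. -/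
open Matrix Finset

lemma symm_dot {n : ℕ} {S : Matrix (Fin n) (Fin n) ℝ} (hS : Sᵀ = S) (a b : Fin n → ℝ) :
    a ⬝ᵥ (S *ᵥ b) = b ⬝ᵥ (S *ᵥ a) := by
  rw [dotProduct_mulVec, ← mulVec_transpose, hS, dotProduct_comm]

lemma tr_dot {n m : ℕ} (S : Matrix (Fin n) (Fin m) ℝ) (a : Fin m → ℝ) (b : Fin n → ℝ) :
    a ⬝ᵥ (Sᵀ *ᵥ b) = (S *ᵥ a) ⬝ᵥ b := by
  rw [dotProduct_mulVec, vecMul_transpose]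

lemma step_identity {n m : ℕ}
    (A Q R P P' : Matrix (Fin n) (Fin n) ℝ) (B E : Matrix (Fin n) (Fin m) ℝ)
    (r x x' f f' : Fin n → ℝ) (Y : Matrix (Fin m) (Fin m) ℝ) (M : Matrix (Fin m) (Fin n) ℝ)
    (d h u : Fin m → ℝ)
    (hQ : Qᵀ = Q) (hR : Rᵀ = R) (hP's : P'ᵀ = P') (hYs : Yᵀ = Y) (hYi : Y * Y⁻¹ = 1)
    (hY : Y = Bᵀ * (R + P') * B) (hM : M = Bᵀ * P' * A)
    (hP : P = Q + Aᵀ * P' * A - Mᵀ * Y⁻¹ * M)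
    (hh : h = (Bᵀ * (R + P') * E) *ᵥ d + Bᵀ *ᵥ f')
    (hf : f = (Aᵀ * P' * E) *ᵥ d + Aᵀ *ᵥ f' - Mᵀ *ᵥ (Y⁻¹ *ᵥ h) - Q *ᵥ r)
    (hx : x' = A *ᵥ x + B *ᵥ u + E *ᵥ d) :
    (x - r) ⬝ᵥ (Q *ᵥ (x - r)) + (B *ᵥ u + E *ᵥ d) ⬝ᵥ (R *ᵥ (B *ᵥ u + E *ᵥ d))
      + (x' ⬝ᵥ (P' *ᵥ x') + 2 * (x' ⬝ᵥ f'))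
    = x ⬝ᵥ (P *ᵥ x) + 2 * (x ⬝ᵥ f)
      + (r ⬝ᵥ (Q *ᵥ r) + (E *ᵥ d) ⬝ᵥ (R *ᵥ (E *ᵥ d)) - h ⬝ᵥ (Y⁻¹ *ᵥ h)
            + (E *ᵥ d) ⬝ᵥ (P' *ᵥ (E *ᵥ d)) + 2 * ((E *ᵥ d) ⬝ᵥ f')
            + (u + Y⁻¹ *ᵥ (M *ᵥ x) + Y⁻¹ *ᵥ h) ⬝ᵥ
                (Y *ᵥ (u + Y⁻¹ *ᵥ (M *ᵥ x) + Y⁻¹ *ᵥ h))) := by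
  have hYis : (Y⁻¹)ᵀ = Y⁻¹ := by rw [transpose_nonsing_inv, hYs]
  have hYv : ∀ v, Y *ᵥ (Y⁻¹ *ᵥ v) = v := fun v => by rw [mulVec_mulVec, hYi, one_mulVec]
  have e1 : x ⬝ᵥ (P *ᵥ x) = x ⬝ᵥ (Q *ᵥ x) + (A *ᵥ x) ⬝ᵥ (P' *ᵥ (A *ᵥ x))
      - (M *ᵥ x) ⬝ᵥ (Y⁻¹ *ᵥ (M *ᵥ x)) := by
    rw [hP]
    simp only [sub_mulVec, add_mulVec, ← mulVec_mulVec, dotProduct_add, dotProduct_sub, tr_dot]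
  have e2 : x ⬝ᵥ f = (A *ᵥ x) ⬝ᵥ (P' *ᵥ (E *ᵥ d)) + (A *ᵥ x) ⬝ᵥ f'
      - (M *ᵥ x) ⬝ᵥ (Y⁻¹ *ᵥ h) - x ⬝ᵥ (Q *ᵥ r) := by
    rw [hf]
    simp only [← mulVec_mulVec, dotProduct_add, dotProduct_sub, tr_dot]
  have e3 : u ⬝ᵥ h = (B *ᵥ u) ⬝ᵥ (R *ᵥ (E *ᵥ d)) + (B *ᵥ u) ⬝ᵥ (P' *ᵥ (E *ᵥ d))
      + (B *ᵥ u) ⬝ᵥ f' := by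
    rw [hh]
    simp only [← mulVec_mulVec, add_mulVec, dotProduct_add, tr_dot]
  have e4 : u ⬝ᵥ (M *ᵥ x) = (B *ᵥ u) ⬝ᵥ (P' *ᵥ (A *ᵥ x)) := by
    rw [hM]
    simp only [← mulVec_mulVec, tr_dot]
  have e5 : u ⬝ᵥ (Y *ᵥ u) = (B *ᵥ u) ⬝ᵥ (R *ᵥ (B *ᵥ u)) + (B *ᵥ u) ⬝ᵥ (P' *ᵥ (B *ᵥ u)) := by
    rw [hY]
    simp only [← mulVec_mulVec, add_mulVec, dotProduct_add, tr_dot]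
  have e6 : (u + Y⁻¹ *ᵥ (M *ᵥ x) + Y⁻¹ *ᵥ h) ⬝ᵥ
                (Y *ᵥ (u + Y⁻¹ *ᵥ (M *ᵥ x) + Y⁻¹ *ᵥ h))
      = u ⬝ᵥ (Y *ᵥ u) + 2 * (u ⬝ᵥ (M *ᵥ x)) + 2 * (u ⬝ᵥ h)
        + (M *ᵥ x) ⬝ᵥ (Y⁻¹ *ᵥ (M *ᵥ x)) + 2 * ((M *ᵥ x) ⬝ᵥ (Y⁻¹ *ᵥ h))
        + h ⬝ᵥ (Y⁻¹ *ᵥ h) := by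
    generalize M *ᵥ x = y
    have a1 : ∀ v w, (Y⁻¹ *ᵥ v) ⬝ᵥ (Y *ᵥ w) = w ⬝ᵥ v := fun v w => by
      rw [symm_dot hYs, hYv]
    have a2 := symm_dot hYis h y
    simp only [mulVec_add, dotProduct_add, add_dotProduct, a1, hYv]
    rw [dotProduct_comm (Y⁻¹ *ᵥ y) y, dotProduct_comm (Y⁻¹ *ᵥ h) y,
      dotProduct_comm (Y⁻¹ *ᵥ h) h, dotProduct_comm (Y⁻¹ *ᵥ y) h, a2]
    ring
  rw [e6, e5, e4, e3, e2, e1, hx]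
  generalize A *ᵥ x = a
  generalize B *ᵥ u = v
  generalize E *ᵥ d = w
  simp only [mulVec_add, mulVec_sub, dotProduct_add, dotProduct_sub, add_dotProduct,
    sub_dotProduct]
  rw [symm_dot hQ r x, symm_dot hR w v, symm_dot hP's w v, symm_dot hP's w a, symm_dot hP's v a]
  ring

/-- **Completion-of-squares identity for the finite-horizon disturbance rejection cost.**
If `Υ k` is positive definite for every `k ∈ {0,…,N}`, then along any trajectory of
`x_{k+1} = A x_k + B u_k + E d_k` the cost `J_N` equals the completed-square expression. -/
theorem completion_of_squares_identity
    (n m N : ℕ)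
    (A Q R : Matrix (Fin n) (Fin n) ℝ)
    (B E : Matrix (Fin n) (Fin m) ℝ)
    (r : Fin n → ℝ)
    (hQ : Q.PosSemidef) (hR : R.PosSemidef)
    (P : ℕ → Matrix (Fin n) (Fin n) ℝ)
    (Υ : ℕ → Matrix (Fin m) (Fin m) ℝ)
    (M : ℕ → Matrix (Fin m) (Fin n) ℝ)
    (hPterm : (P (N + 1)).PosSemidef)
    (hΥ : ∀ k ≤ N, Υ k = Bᵀ * (R + P (k + 1)) * B)
    (hM : ∀ k ≤ N, M k = Bᵀ * P (k + 1) * A)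
    (hP : ∀ k ≤ N, P k = Q + Aᵀ * P (k + 1) * A - (M k)ᵀ * (Υ k)⁻¹ * M k)
    (hΥpos : ∀ k ≤ N, (Υ k).PosDef)
    (d : ℕ → Fin m → ℝ)
    (f : ℕ → Fin n → ℝ) (h : ℕ → Fin m → ℝ)
    (hfterm : f (N + 1) = -(P (N + 1) *ᵥ r))
    (hh : ∀ k ≤ N, h k = (Bᵀ * (R + P (k + 1)) * E) *ᵥ d k + Bᵀ *ᵥ f (k + 1))
    (hf : ∀ k ≤ N, f k = (Aᵀ * P (k + 1) * E) *ᵥ d k + Aᵀ *ᵥ f (k + 1)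
            - (M k)ᵀ *ᵥ ((Υ k)⁻¹ *ᵥ h k) - Q *ᵥ r)
    (x : ℕ → Fin n → ℝ) (u : ℕ → Fin m → ℝ)
    (hx : ∀ k ≤ N, x (k + 1) = A *ᵥ x k + B *ᵥ u k + E *ᵥ d k) :
    (∑ k ∈ range (N + 1),
        ((x k - r) ⬝ᵥ (Q *ᵥ (x k - r))
          + (B *ᵥ u k + E *ᵥ d k) ⬝ᵥ (R *ᵥ (B *ᵥ u k + E *ᵥ d k))))
      + (x (N + 1) - r) ⬝ᵥ (P (N + 1) *ᵥ (x (N + 1) - r))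
    = x 0 ⬝ᵥ (P 0 *ᵥ x 0) + 2 * (x 0 ⬝ᵥ f 0) + r ⬝ᵥ (P (N + 1) *ᵥ r)
      + ∑ k ∈ range (N + 1),
          (r ⬝ᵥ (Q *ᵥ r)
            + (E *ᵥ d k) ⬝ᵥ (R *ᵥ (E *ᵥ d k))
            - h k ⬝ᵥ ((Υ k)⁻¹ *ᵥ h k)
            + (E *ᵥ d k) ⬝ᵥ (P (k + 1) *ᵥ (E *ᵥ d k))
            + 2 * ((E *ᵥ d k) ⬝ᵥ f (k + 1))
            + (u k + (Υ k)⁻¹ *ᵥ (M k *ᵥ x k) + (Υ k)⁻¹ *ᵥ h k) ⬝ᵥ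
                (Υ k *ᵥ (u k + (Υ k)⁻¹ *ᵥ (M k *ᵥ x k) + (Υ k)⁻¹ *ᵥ h k))) := by
  have hQs : Qᵀ = Q := by simpa using hQ.isHermitian.eq
  have hRs : Rᵀ = R := by simpa using hR.isHermitian.eq
  have hYs : ∀ k ≤ N, (Υ k)ᵀ = Υ k := fun k hk => by
    simpa using (hΥpos k hk).isHermitian.eq
  have hPs : ∀ k ≤ N + 1, (P k)ᵀ = P k := by
    intro k hk
    induction hk using Nat.decreasingInduction with
    | self => simpa using hPterm.isHermitian.eq
    | of_succ k hk ih =>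
      have hk' : k ≤ N := by omega
      rw [hP k hk']
      simp only [transpose_add, transpose_sub, transpose_mul, transpose_transpose,
        transpose_nonsing_inv, hYs k hk', hQs, ih, Matrix.mul_assoc]
  have key : ∀ j ≤ N + 1,
      (∑ k ∈ range j,
        ((x k - r) ⬝ᵥ (Q *ᵥ (x k - r))
          + (B *ᵥ u k + E *ᵥ d k) ⬝ᵥ (R *ᵥ (B *ᵥ u k + E *ᵥ d k))))
      + (x j ⬝ᵥ (P j *ᵥ x j) + 2 * (x j ⬝ᵥ f j))
    = x 0 ⬝ᵥ (P 0 *ᵥ x 0) + 2 * (x 0 ⬝ᵥ f 0)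
      + ∑ k ∈ range j,
          (r ⬝ᵥ (Q *ᵥ r)
            + (E *ᵥ d k) ⬝ᵥ (R *ᵥ (E *ᵥ d k))
            - h k ⬝ᵥ ((Υ k)⁻¹ *ᵥ h k)
            + (E *ᵥ d k) ⬝ᵥ (P (k + 1) *ᵥ (E *ᵥ d k))
            + 2 * ((E *ᵥ d k) ⬝ᵥ f (k + 1))
            + (u k + (Υ k)⁻¹ *ᵥ (M k *ᵥ x k) + (Υ k)⁻¹ *ᵥ h k) ⬝ᵥ
                (Υ k *ᵥ (u k + (Υ k)⁻¹ *ᵥ (M k *ᵥ x k) + (Υ k)⁻¹ *ᵥ h k))) := by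
    intro j
    induction j with
    | zero => intro _; simp
    | succ j ih =>
      intro hj
      have hj' : j ≤ N := by omega
      have ih' := ih (by omega)
      have hinv : Υ j * (Υ j)⁻¹ = 1 :=
        Matrix.mul_nonsing_inv _ ((Matrix.isUnit_iff_isUnit_det _).1 (hΥpos j hj').isUnit)
      have st := step_identity A Q R (P j) (P (j + 1)) B E r (x j) (x (j + 1)) (f j) (f (j + 1))
        (Υ j) (M j) (d j) (h j) (u j) hQs hRs (hPs _ hj) (hYs j hj') hinv (hΥ j hj') (hM j hj')
        (hP j hj') (hh j hj') (hf j hj') (hx j hj')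
      rw [sum_range_succ, sum_range_succ]
      linarith
  have k1 := key (N + 1) le_rfl
  have t : (x (N + 1) - r) ⬝ᵥ (P (N + 1) *ᵥ (x (N + 1) - r))
      = x (N + 1) ⬝ᵥ (P (N + 1) *ᵥ x (N + 1)) + 2 * (x (N + 1) ⬝ᵥ f (N + 1))
        + r ⬝ᵥ (P (N + 1) *ᵥ r) := by
    rw [hfterm]
    simp only [mulVec_sub, dotProduct_sub, sub_dotProduct, dotProduct_neg]
    rw [symm_dot (hPs _ le_rfl) r (x (N + 1))]
    ring
  rw [t]
  linarith
end

section
/- Suppose Υ_k is positive definite for every k ∈ {0,…,N}. Then for every initial state x_0 and every disturbance sequence (d_k), the cost J_N is minimized over all control sequences by the unique controller u_k = −Υ_k^{-1}M_k x_k − Υ_k^{-1}h_k (with x_k the resulting closed-loop state), and the optimal cost equals J_N^* = x_0'P_0 x_0 + 2 x_0'f_0 + r'P_{N+1} r + Σ_{k=0}^N [ r'Q r + d_k'E'(R + P_{k+1})E d_k + 2 d_k'E'f_{k+1} − h_k'Υ_k^{-1}h_k ]. -/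
open Matrix Finset

lemma fh_symm {n : ℕ} {S : Matrix (Fin n) (Fin n) ℝ} (hS : Sᵀ = S) (x y : Fin n → ℝ) :
    x ⬝ᵥ (S *ᵥ y) = y ⬝ᵥ (S *ᵥ x) := by
  rw [dotProduct_mulVec, ← mulVec_transpose, hS, dotProduct_comm]

lemma fh_tr {n m : ℕ} (S : Matrix (Fin n) (Fin m) ℝ) (x : Fin m → ℝ) (y : Fin n → ℝ) :
    x ⬝ᵥ (Sᵀ *ᵥ y) = (S *ᵥ x) ⬝ᵥ y := by
  rw [dotProduct_mulVec, vecMul_transpose]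

lemma fh_step {n m : ℕ} (A Q R P P' : Matrix (Fin n) (Fin n) ℝ)
    (B E : Matrix (Fin n) (Fin m) ℝ) (Y : Matrix (Fin m) (Fin m) ℝ)
    (M : Matrix (Fin m) (Fin n) ℝ) (r f f' x : Fin n → ℝ) (d h u : Fin m → ℝ)
    (hQ : Qᵀ = Q) (hR : Rᵀ = R) (hPs : Pᵀ = P) (hYs : Yᵀ = Y) (hYd : IsUnit Y.det)
    (hY : Y = Bᵀ * (R + P) * B) (hM : M = Bᵀ * P * A)
    (hP : P' = Q + Aᵀ * P * A - Mᵀ * Y⁻¹ * M)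
    (hh : h = (Bᵀ * (R + P) * E) *ᵥ d + Bᵀ *ᵥ f)
    (hf : f' = (Aᵀ * P * E) *ᵥ d + Aᵀ *ᵥ f - Mᵀ *ᵥ (Y⁻¹ *ᵥ h) - Q *ᵥ r) :
    (x - r) ⬝ᵥ (Q *ᵥ (x - r)) + (B *ᵥ u + E *ᵥ d) ⬝ᵥ (R *ᵥ (B *ᵥ u + E *ᵥ d))
      + (A *ᵥ x + B *ᵥ u + E *ᵥ d) ⬝ᵥ (P *ᵥ (A *ᵥ x + B *ᵥ u + E *ᵥ d))
      + 2 * ((A *ᵥ x + B *ᵥ u + E *ᵥ d) ⬝ᵥ f)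
    = x ⬝ᵥ (P' *ᵥ x) + 2 * (x ⬝ᵥ f')
      + (r ⬝ᵥ (Q *ᵥ r) + (E *ᵥ d) ⬝ᵥ ((R + P) *ᵥ (E *ᵥ d)) + 2 * ((E *ᵥ d) ⬝ᵥ f)
          - h ⬝ᵥ (Y⁻¹ *ᵥ h))
      + (u - (-(Y⁻¹ *ᵥ (M *ᵥ x)) - Y⁻¹ *ᵥ h)) ⬝ᵥ
          (Y *ᵥ (u - (-(Y⁻¹ *ᵥ (M *ᵥ x)) - Y⁻¹ *ᵥ h))) := by
  have hZs : (Y⁻¹)ᵀ = Y⁻¹ := by rw [transpose_nonsing_inv, hYs]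
  have hYZ : ∀ v, Y *ᵥ (Y⁻¹ *ᵥ v) = v := fun v => by
    rw [mulVec_mulVec, mul_nonsing_inv _ hYd, one_mulVec]
  have e1 : u ⬝ᵥ (Y *ᵥ u) = (B *ᵥ u) ⬝ᵥ (R *ᵥ (B *ᵥ u)) + (B *ᵥ u) ⬝ᵥ (P *ᵥ (B *ᵥ u)) := by
    rw [hY, ← mulVec_mulVec, ← mulVec_mulVec, fh_tr, add_mulVec, dotProduct_add]
  have e2 : u ⬝ᵥ (M *ᵥ x) = (B *ᵥ u) ⬝ᵥ (P *ᵥ (A *ᵥ x)) := by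
    rw [hM, ← mulVec_mulVec, ← mulVec_mulVec, fh_tr]
  have e3 : u ⬝ᵥ h = (B *ᵥ u) ⬝ᵥ (R *ᵥ (E *ᵥ d)) + (B *ᵥ u) ⬝ᵥ (P *ᵥ (E *ᵥ d))
      + (B *ᵥ u) ⬝ᵥ f := by
    rw [hh, ← mulVec_mulVec, ← mulVec_mulVec, dotProduct_add, fh_tr, fh_tr, add_mulVec,
      dotProduct_add]
  have e4 : x ⬝ᵥ (P' *ᵥ x) = x ⬝ᵥ (Q *ᵥ x) + (A *ᵥ x) ⬝ᵥ (P *ᵥ (A *ᵥ x))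
      - (M *ᵥ x) ⬝ᵥ (Y⁻¹ *ᵥ (M *ᵥ x)) := by
    rw [hP, sub_mulVec, add_mulVec, ← mulVec_mulVec, ← mulVec_mulVec, ← mulVec_mulVec,
      ← mulVec_mulVec, dotProduct_sub, dotProduct_add, fh_tr, fh_tr]
  have e5 : x ⬝ᵥ f' = (A *ᵥ x) ⬝ᵥ (P *ᵥ (E *ᵥ d)) + (A *ᵥ x) ⬝ᵥ f
      - (M *ᵥ x) ⬝ᵥ (Y⁻¹ *ᵥ h) - x ⬝ᵥ (Q *ᵥ r) := by
    rw [hf, ← mulVec_mulVec, ← mulVec_mulVec, dotProduct_sub, dotProduct_sub, dotProduct_add,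
      fh_tr, fh_tr, fh_tr]
  have e6 : (u - (-(Y⁻¹ *ᵥ (M *ᵥ x)) - Y⁻¹ *ᵥ h)) ⬝ᵥ
          (Y *ᵥ (u - (-(Y⁻¹ *ᵥ (M *ᵥ x)) - Y⁻¹ *ᵥ h)))
      = u ⬝ᵥ (Y *ᵥ u) + 2 * (u ⬝ᵥ (M *ᵥ x)) + 2 * (u ⬝ᵥ h)
        + (M *ᵥ x) ⬝ᵥ (Y⁻¹ *ᵥ (M *ᵥ x)) + 2 * ((M *ᵥ x) ⬝ᵥ (Y⁻¹ *ᵥ h))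
        + h ⬝ᵥ (Y⁻¹ *ᵥ h) := by
    have q1 := fh_symm hYs (Y⁻¹ *ᵥ (M *ᵥ x)) u
    have q2 := fh_symm hYs (Y⁻¹ *ᵥ h) u
    have q3 := fh_symm hZs h (M *ᵥ x)
    rw [hYZ] at q1 q2
    simp only [mulVec_sub, mulVec_neg, hYZ, dotProduct_sub, sub_dotProduct, dotProduct_neg,
      neg_dotProduct, q1, q2]
    rw [dotProduct_comm (Y⁻¹ *ᵥ (M *ᵥ x)) (M *ᵥ x), dotProduct_comm (Y⁻¹ *ᵥ (M *ᵥ x)) h,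
      dotProduct_comm (Y⁻¹ *ᵥ h) h, dotProduct_comm (Y⁻¹ *ᵥ h) (M *ᵥ x)]
    linear_combination q3
  rw [e6, e1, e2, e3, e4, e5]
  simp only [mulVec_add, mulVec_sub, add_mulVec, dotProduct_sub, sub_dotProduct, dotProduct_add,
    add_dotProduct]
  linear_combination (-1 : ℝ) * fh_symm hQ r x + fh_symm hR (E *ᵥ d) (B *ᵥ u)
    + fh_symm hPs (E *ᵥ d) (B *ᵥ u) + fh_symm hPs (A *ᵥ x) (B *ᵥ u)
    + fh_symm hPs (E *ᵥ d) (A *ᵥ x)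

/-- **Finite-horizon optimal disturbance rejection controller (sufficiency).**
If `Υ k > 0` for all `k ∈ {0,…,N}`, then for every initial state `x0` and every
disturbance sequence `d`, the cost `J_N` is minimized over all control sequences by the
unique controller `u_k = −Υ_k⁻¹ M_k x_k − Υ_k⁻¹ h_k`, and the optimal cost equals the
stated expression. -/
theorem finite_horizon_optimal_controller
    (n m N : ℕ)
    (A Q R : Matrix (Fin n) (Fin n) ℝ)
    (B E : Matrix (Fin n) (Fin m) ℝ)
    (r : Fin n → ℝ)
    (hQ : Q.PosSemidef) (hR : R.PosSemidef)
    (P : ℕ → Matrix (Fin n) (Fin n) ℝ)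
    (Υ : ℕ → Matrix (Fin m) (Fin m) ℝ)
    (M : ℕ → Matrix (Fin m) (Fin n) ℝ)
    (hPterm : (P (N + 1)).PosSemidef)
    (hΥ : ∀ k ≤ N, Υ k = Bᵀ * (R + P (k + 1)) * B)
    (hM : ∀ k ≤ N, M k = Bᵀ * P (k + 1) * A)
    (hP : ∀ k ≤ N, P k = Q + Aᵀ * P (k + 1) * A - (M k)ᵀ * (Υ k)⁻¹ * M k)
    (hΥpos : ∀ k ≤ N, (Υ k).PosDef)
    (d : ℕ → Fin m → ℝ)
    (f : ℕ → Fin n → ℝ) (h : ℕ → Fin m → ℝ)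
    (hfterm : f (N + 1) = -(P (N + 1) *ᵥ r))
    (hh : ∀ k ≤ N, h k = (Bᵀ * (R + P (k + 1)) * E) *ᵥ d k + Bᵀ *ᵥ f (k + 1))
    (hf : ∀ k ≤ N, f k = (Aᵀ * P (k + 1) * E) *ᵥ d k + Aᵀ *ᵥ f (k + 1)
            - (M k)ᵀ *ᵥ ((Υ k)⁻¹ *ᵥ h k) - Q *ᵥ r)
    -- the cost functional `J_N` of a trajectory/control pair
    (J : (ℕ → Fin n → ℝ) → (ℕ → Fin m → ℝ) → ℝ)
    (hJ : ∀ x u, J x u =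
        (∑ k ∈ range (N + 1),
          ((x k - r) ⬝ᵥ (Q *ᵥ (x k - r))
            + (B *ᵥ u k + E *ᵥ d k) ⬝ᵥ (R *ᵥ (B *ᵥ u k + E *ᵥ d k))))
        + (x (N + 1) - r) ⬝ᵥ (P (N + 1) *ᵥ (x (N + 1) - r)))
    -- initial state and the closed-loop optimal trajectory
    (x0 : Fin n → ℝ)
    (xs : ℕ → Fin n → ℝ) (us : ℕ → Fin m → ℝ)
    (hxs0 : xs 0 = x0)
    (hus : ∀ k ≤ N, us k = -((Υ k)⁻¹ *ᵥ (M k *ᵥ xs k)) - (Υ k)⁻¹ *ᵥ h k)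
    (hxs : ∀ k ≤ N, xs (k + 1) = A *ᵥ xs k + B *ᵥ us k + E *ᵥ d k) :
    J xs us
      = x0 ⬝ᵥ (P 0 *ᵥ x0) + 2 * (x0 ⬝ᵥ f 0) + r ⬝ᵥ (P (N + 1) *ᵥ r)
        + ∑ k ∈ range (N + 1),
            (r ⬝ᵥ (Q *ᵥ r)
              + (E *ᵥ d k) ⬝ᵥ ((R + P (k + 1)) *ᵥ (E *ᵥ d k))
              + 2 * ((E *ᵥ d k) ⬝ᵥ f (k + 1))
              - h k ⬝ᵥ ((Υ k)⁻¹ *ᵥ h k))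
    ∧ (∀ (x : ℕ → Fin n → ℝ) (u : ℕ → Fin m → ℝ),
        x 0 = x0 → (∀ k ≤ N, x (k + 1) = A *ᵥ x k + B *ᵥ u k + E *ᵥ d k) →
        J xs us ≤ J x u)
    ∧ (∀ (x : ℕ → Fin n → ℝ) (u : ℕ → Fin m → ℝ),
        x 0 = x0 → (∀ k ≤ N, x (k + 1) = A *ᵥ x k + B *ᵥ u k + E *ᵥ d k) →
        J x u = J xs us →
        ∀ k ≤ N, u k = -((Υ k)⁻¹ *ᵥ (M k *ᵥ x k)) - (Υ k)⁻¹ *ᵥ h k) := by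
  have hQs : Qᵀ = Q := by simpa [IsHermitian] using hQ.isHermitian
  have hRs : Rᵀ = R := by simpa [IsHermitian] using hR.isHermitian
  have hYs : ∀ k ≤ N, (Υ k)ᵀ = Υ k := fun k hk => by
    simpa [IsHermitian] using (hΥpos k hk).isHermitian
  have hPs : ∀ j k, k + j = N + 1 → (P k)ᵀ = P k := by
    intro j
    induction j with
    | zero =>
      intro k hk
      obtain rfl : k = N + 1 := by omega
      simpa [IsHermitian] using hPterm.isHermitian
    | succ j ih =>
      intro k hk
      have h1 := ih (k + 1) (by omega)
      rw [hP k (by omega)]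
      simp only [transpose_sub, transpose_add, transpose_mul, transpose_transpose, hQs, h1,
        transpose_nonsing_inv, hYs k (by omega), Matrix.mul_assoc]
  have key : ∀ (x : ℕ → Fin n → ℝ) (u : ℕ → Fin m → ℝ),
      x 0 = x0 → (∀ k ≤ N, x (k + 1) = A *ᵥ x k + B *ᵥ u k + E *ᵥ d k) →
      J x u = x0 ⬝ᵥ (P 0 *ᵥ x0) + 2 * (x0 ⬝ᵥ f 0) + r ⬝ᵥ (P (N + 1) *ᵥ r)
        + ∑ k ∈ range (N + 1),
            (r ⬝ᵥ (Q *ᵥ r)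
              + (E *ᵥ d k) ⬝ᵥ ((R + P (k + 1)) *ᵥ (E *ᵥ d k))
              + 2 * ((E *ᵥ d k) ⬝ᵥ f (k + 1))
              - h k ⬝ᵥ ((Υ k)⁻¹ *ᵥ h k))
        + ∑ k ∈ range (N + 1), (u k - (-((Υ k)⁻¹ *ᵥ (M k *ᵥ x k)) - (Υ k)⁻¹ *ᵥ h k)) ⬝ᵥ
            (Υ k *ᵥ (u k - (-((Υ k)⁻¹ *ᵥ (M k *ᵥ x k)) - (Υ k)⁻¹ *ᵥ h k))) := by
    intro x u hx0 hx
    have hsum : ∑ k ∈ range (N + 1),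
          ((x k - r) ⬝ᵥ (Q *ᵥ (x k - r))
            + (B *ᵥ u k + E *ᵥ d k) ⬝ᵥ (R *ᵥ (B *ᵥ u k + E *ᵥ d k)))
        = ∑ k ∈ range (N + 1),
          (((r ⬝ᵥ (Q *ᵥ r)
              + (E *ᵥ d k) ⬝ᵥ ((R + P (k + 1)) *ᵥ (E *ᵥ d k))
              + 2 * ((E *ᵥ d k) ⬝ᵥ f (k + 1))
              - h k ⬝ᵥ ((Υ k)⁻¹ *ᵥ h k))
            + (u k - (-((Υ k)⁻¹ *ᵥ (M k *ᵥ x k)) - (Υ k)⁻¹ *ᵥ h k)) ⬝ᵥ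
              (Υ k *ᵥ (u k - (-((Υ k)⁻¹ *ᵥ (M k *ᵥ x k)) - (Υ k)⁻¹ *ᵥ h k))))
          - ((x (k + 1) ⬝ᵥ (P (k + 1) *ᵥ x (k + 1)) + 2 * (x (k + 1) ⬝ᵥ f (k + 1)))
            - (x k ⬝ᵥ (P k *ᵥ x k) + 2 * (x k ⬝ᵥ f k)))) := by
      refine Finset.sum_congr rfl fun k hk => ?_
      have hk : k ≤ N := by simpa [Nat.lt_succ_iff] using hk
      have st := fh_step A Q R (P (k + 1)) (P k) B E (Υ k) (M k) r (f (k + 1)) (f k) (x k)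
        (d k) (h k) (u k) hQs hRs (hPs (N - k) (k + 1) (by omega)) (hYs k hk)
        (hΥpos k hk).det_pos.ne'.isUnit (hΥ k hk) (hM k hk) (hP k hk) (hh k hk) (hf k hk)
      rw [← hx k hk] at st
      linear_combination st
    rw [hJ, hsum, Finset.sum_sub_distrib, Finset.sum_add_distrib,
      Finset.sum_range_sub (fun k => x k ⬝ᵥ (P k *ᵥ x k) + 2 * (x k ⬝ᵥ f k)), hx0, hfterm]
    simp only [mulVec_sub, dotProduct_sub, sub_dotProduct, dotProduct_neg]
    linear_combination (-1 : ℝ) * fh_symm (hPs 0 (N + 1) rfl) r (x (N + 1))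
  have hopt := key xs us hxs0 hxs
  rw [Finset.sum_eq_zero (s := range (N + 1)) (f := fun k =>
    (us k - (-((Υ k)⁻¹ *ᵥ (M k *ᵥ xs k)) - (Υ k)⁻¹ *ᵥ h k)) ⬝ᵥ
            (Υ k *ᵥ (us k - (-((Υ k)⁻¹ *ᵥ (M k *ᵥ xs k)) - (Υ k)⁻¹ *ᵥ h k))))
    (fun k hk => by
      have hk : k ≤ N := by simpa [Nat.lt_succ_iff] using hk
      simp only [← hus k hk, sub_self, zero_dotProduct]), add_zero] at hopt
  have hnn : ∀ k ∈ range (N + 1), ∀ v : Fin m → ℝ, 0 ≤ v ⬝ᵥ (Υ k *ᵥ v) := by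
    intro k hk v
    have hk : k ≤ N := by simpa [Nat.lt_succ_iff] using hk
    simpa using (hΥpos k hk).posSemidef.dotProduct_mulVec_nonneg v
  refine ⟨hopt, fun x u hx0 hx => ?_, fun x u hx0 hx heq k hk => ?_⟩
  · rw [hopt, key x u hx0 hx]
    exact le_add_of_nonneg_right (Finset.sum_nonneg fun k hk => hnn k hk _)
  · rw [hopt, key x u hx0 hx] at heq
    have hz := (Finset.sum_eq_zero_iff_of_nonneg fun k hk => hnn k hk _).1
      (add_eq_left.1 heq) k (by simpa [Nat.lt_succ_iff] using hk)
    by_contra hne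
    have := (hΥpos k hk).dotProduct_mulVec_pos (sub_ne_zero.2 hne)
    simp only [star_trivial] at this
    exact this.ne' hz
end

section
/- Suppose Υ_k is positive definite for every k ∈ {0,…,N}, and define L_k = x_k'P_k x_k + 2 x_k'f_k along any trajectory of the system. Then for every k ∈ {0,…,N}, L_k − L_{k+1} = (x_k − r)'Q(x_k − r) + (B u_k + E d_k)'R(B u_k + E d_k) − r'Q r − d_k'E'R E d_k − (u_k + Υ_k^{-1}M_k x_k + Υ_k^{-1}h_k)'Υ_k (u_k + Υ_k^{-1}M_k x_k + Υ_k^{-1}h_k) + h_k'Υ_k^{-1}h_k − d_k'E'P_{k+1}E d_k − d_k'E'f_{k+1} − f_{k+1}'E d_k. -/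
open Matrix Finset

/-- **One-step Lyapunov-difference identity (equation (19) of the paper).**
With `L_k = x_k' P_k x_k + 2 x_k' f_k` along a trajectory of
`x_{k+1} = A x_k + B u_k + E d_k`, the difference `L_k − L_{k+1}` equals the stated
combination of stage cost, square-completion and disturbance terms. -/
theorem lyapunov_difference_identity
    (n m N : ℕ)
    (A Q R : Matrix (Fin n) (Fin n) ℝ)
    (B E : Matrix (Fin n) (Fin m) ℝ)
    (r : Fin n → ℝ)
    (hQ : Q.PosSemidef) (hR : R.PosSemidef)
    (P : ℕ → Matrix (Fin n) (Fin n) ℝ)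
    (Υ : ℕ → Matrix (Fin m) (Fin m) ℝ)
    (M : ℕ → Matrix (Fin m) (Fin n) ℝ)
    (hPterm : (P (N + 1)).PosSemidef)
    (hΥ : ∀ k ≤ N, Υ k = Bᵀ * (R + P (k + 1)) * B)
    (hM : ∀ k ≤ N, M k = Bᵀ * P (k + 1) * A)
    (hP : ∀ k ≤ N, P k = Q + Aᵀ * P (k + 1) * A - (M k)ᵀ * (Υ k)⁻¹ * M k)
    (hΥpos : ∀ k ≤ N, (Υ k).PosDef)
    (d : ℕ → Fin m → ℝ)
    (f : ℕ → Fin n → ℝ) (h : ℕ → Fin m → ℝ)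
    (hfterm : f (N + 1) = -(P (N + 1) *ᵥ r))
    (hh : ∀ k ≤ N, h k = (Bᵀ * (R + P (k + 1)) * E) *ᵥ d k + Bᵀ *ᵥ f (k + 1))
    (hf : ∀ k ≤ N, f k = (Aᵀ * P (k + 1) * E) *ᵥ d k + Aᵀ *ᵥ f (k + 1)
            - (M k)ᵀ *ᵥ ((Υ k)⁻¹ *ᵥ h k) - Q *ᵥ r)
    (x : ℕ → Fin n → ℝ) (u : ℕ → Fin m → ℝ)
    (hx : ∀ k ≤ N, x (k + 1) = A *ᵥ x k + B *ᵥ u k + E *ᵥ d k)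
    -- `L_k = x_k' P_k x_k + 2 x_k' f_k`
    (L : ℕ → ℝ)
    (hL : ∀ k ≤ N + 1, L k = x k ⬝ᵥ (P k *ᵥ x k) + 2 * (x k ⬝ᵥ f k)) :
    ∀ k ≤ N,
      L k - L (k + 1)
        = (x k - r) ⬝ᵥ (Q *ᵥ (x k - r))
          + (B *ᵥ u k + E *ᵥ d k) ⬝ᵥ (R *ᵥ (B *ᵥ u k + E *ᵥ d k))
          - r ⬝ᵥ (Q *ᵥ r)
          - (E *ᵥ d k) ⬝ᵥ (R *ᵥ (E *ᵥ d k))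
          - (u k + (Υ k)⁻¹ *ᵥ (M k *ᵥ x k) + (Υ k)⁻¹ *ᵥ h k) ⬝ᵥ
              (Υ k *ᵥ (u k + (Υ k)⁻¹ *ᵥ (M k *ᵥ x k) + (Υ k)⁻¹ *ᵥ h k))
          + h k ⬝ᵥ ((Υ k)⁻¹ *ᵥ h k)
          - (E *ᵥ d k) ⬝ᵥ (P (k + 1) *ᵥ (E *ᵥ d k))
          - (E *ᵥ d k) ⬝ᵥ f (k + 1)
          - f (k + 1) ⬝ᵥ (E *ᵥ d k) := by
  have hsymm : ∀ j ≤ N + 1, (P (N + 1 - j))ᵀ = P (N + 1 - j) := by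
    intro j
    induction j with
    | zero =>
      intro _
      have := hPterm.isHermitian.eq
      simpa [conjTranspose_eq_transpose_of_trivial] using this
    | succ j ih =>
      intro hj
      have ih' := ih (by omega)
      have e : N + 1 - j = (N + 1 - (j + 1)) + 1 := by omega
      rw [e] at ih'
      generalize N + 1 - (j + 1) = k at *
      have hk : k ≤ N := by omega
      have hQt : Qᵀ = Q := by
        have := hQ.isHermitian.eq
        simpa [conjTranspose_eq_transpose_of_trivial] using this
      have hUt : (Υ k)ᵀ = Υ k := by
        have := (hΥpos k hk).isHermitian.eq
        simpa [conjTranspose_eq_transpose_of_trivial] using this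
      rw [hP k hk]
      simp only [transpose_add, transpose_sub, transpose_mul, transpose_transpose, hQt, ih',
        transpose_nonsing_inv, hUt, Matrix.mul_assoc]
  intro k hk
  have hPs : (P (k + 1))ᵀ = P (k + 1) := by
    have := hsymm (N - k) (by omega)
    have e : N + 1 - (N - k) = k + 1 := by omega
    rwa [e] at this
  have hQt : Qᵀ = Q := by
    have := hQ.isHermitian.eq
    simpa [conjTranspose_eq_transpose_of_trivial] using this
  have hRt : Rᵀ = R := by
    have := hR.isHermitian.eq
    simpa [conjTranspose_eq_transpose_of_trivial] using this
  have hUt : (Υ k)ᵀ = Υ k := by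
    have := (hΥpos k hk).isHermitian.eq
    simpa [conjTranspose_eq_transpose_of_trivial] using this
  have hdet : IsUnit (Υ k).det := (hΥpos k hk).det_pos.ne'.isUnit
  have sw : ∀ {p q : ℕ} (X : Matrix (Fin p) (Fin q) ℝ) (v : Fin p → ℝ) (w : Fin q → ℝ),
      v ⬝ᵥ (X *ᵥ w) = (Xᵀ *ᵥ v) ⬝ᵥ w := by
    intro p q X v w
    rw [dotProduct_mulVec, mulVec_transpose]
  have sy : ∀ {p : ℕ} (X : Matrix (Fin p) (Fin p) ℝ), Xᵀ = X → ∀ (v w : Fin p → ℝ),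
      v ⬝ᵥ (X *ᵥ w) = w ⬝ᵥ (X *ᵥ v) := by
    intro p X hX v w
    rw [sw, hX, dotProduct_comm]
  have c1 : Υ k *ᵥ ((Υ k)⁻¹ *ᵥ (M k *ᵥ x k)) = M k *ᵥ x k := by
    rw [mulVec_mulVec, mul_nonsing_inv _ hdet, one_mulVec]
  have c2 : Υ k *ᵥ ((Υ k)⁻¹ *ᵥ h k) = h k := by
    rw [mulVec_mulVec, mul_nonsing_inv _ hdet, one_mulVec]
  have hPx : P k *ᵥ x k = Q *ᵥ x k + Aᵀ *ᵥ (P (k + 1) *ᵥ (A *ᵥ x k))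
      - (M k)ᵀ *ᵥ ((Υ k)⁻¹ *ᵥ (M k *ᵥ x k)) := by
    rw [hP k hk]
    simp only [add_mulVec, sub_mulVec, mulVec_mulVec, Matrix.mul_assoc]
  have hUu : u k ⬝ᵥ (Υ k *ᵥ u k) = (B *ᵥ u k) ⬝ᵥ (R *ᵥ (B *ᵥ u k))
      + (B *ᵥ u k) ⬝ᵥ (P (k + 1) *ᵥ (B *ᵥ u k)) := by
    rw [hΥ k hk, ← mulVec_mulVec, ← mulVec_mulVec, sw, transpose_transpose, add_mulVec,
      dotProduct_add]
  have hMx : u k ⬝ᵥ (M k *ᵥ x k) = (B *ᵥ u k) ⬝ᵥ (P (k + 1) *ᵥ (A *ᵥ x k)) := by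
    rw [hM k hk, ← mulVec_mulVec, ← mulVec_mulVec, sw, transpose_transpose]
  have huh : u k ⬝ᵥ h k = (B *ᵥ u k) ⬝ᵥ (R *ᵥ (E *ᵥ d k))
      + (B *ᵥ u k) ⬝ᵥ (P (k + 1) *ᵥ (E *ᵥ d k)) + (B *ᵥ u k) ⬝ᵥ f (k + 1) := by
    rw [hh k hk, dotProduct_add, ← mulVec_mulVec, ← mulVec_mulVec, sw, sw Bᵀ,
      transpose_transpose, add_mulVec, dotProduct_add]
  have hfk : x k ⬝ᵥ f k = (A *ᵥ x k) ⬝ᵥ (P (k + 1) *ᵥ (E *ᵥ d k)) + (A *ᵥ x k) ⬝ᵥ f (k + 1)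
      - (M k *ᵥ x k) ⬝ᵥ ((Υ k)⁻¹ *ᵥ h k) - x k ⬝ᵥ (Q *ᵥ r) := by
    rw [hf k hk, dotProduct_sub, dotProduct_sub, dotProduct_add, ← mulVec_mulVec,
      ← mulVec_mulVec, sw Aᵀ, sw Aᵀ, sw (M k)ᵀ, transpose_transpose, transpose_transpose]
  have hxP : x k ⬝ᵥ (P k *ᵥ x k) = x k ⬝ᵥ (Q *ᵥ x k)
      + (A *ᵥ x k) ⬝ᵥ (P (k + 1) *ᵥ (A *ᵥ x k))
      - (M k *ᵥ x k) ⬝ᵥ ((Υ k)⁻¹ *ᵥ (M k *ᵥ x k)) := by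
    rw [hPx, dotProduct_sub, dotProduct_add, sw Aᵀ, sw (M k)ᵀ, transpose_transpose,
      transpose_transpose]
  rw [hL k (by omega), hL (k + 1) (by omega), hxP, hfk, hx k hk]
  have s1 := sy _ hUt ((Υ k)⁻¹ *ᵥ (M k *ᵥ x k)) (u k)
  have s2 := sy _ hUt ((Υ k)⁻¹ *ᵥ h k) (u k)
  have s3 := sy _ hUt ((Υ k)⁻¹ *ᵥ h k) ((Υ k)⁻¹ *ᵥ (M k *ᵥ x k))
  rw [c1] at s1 s3
  rw [c2] at s2 s3
  have s4 := sy _ hQt r (x k)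
  have s5 := sy _ hRt (E *ᵥ d k) (B *ᵥ u k)
  have s6 := sy _ hPs (E *ᵥ d k) (B *ᵥ u k)
  have s7 := sy _ hPs (E *ᵥ d k) (A *ᵥ x k)
  have s8 := sy _ hPs (A *ᵥ x k) (B *ᵥ u k)
  have t1 := dotProduct_comm (f (k + 1)) (E *ᵥ d k)
  have t2 := dotProduct_comm (M k *ᵥ x k) ((Υ k)⁻¹ *ᵥ h k)
  have t3 := dotProduct_comm (M k *ᵥ x k) ((Υ k)⁻¹ *ᵥ (M k *ᵥ x k))
  have t4 := dotProduct_comm (h k) ((Υ k)⁻¹ *ᵥ h k)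
  simp only [mulVec_add, mulVec_sub, dotProduct_add, dotProduct_sub, add_dotProduct,
    sub_dotProduct, c1, c2]
  linarith
end

section
/- Suppose Υ_k is positive definite for every k ∈ {0,…,N}. Let n ∈ {0,…,N−1} and suppose that for every k ∈ {n+1,…,N} the control is given by u_k = −Υ_k^{-1}M_k x_k − Υ_k^{-1}h_k. Then the cost-to-go satisfies J̄_{n+1} := Σ_{k=n+1}^N [(x_k − r)'Q(x_k − r) + (B u_k + E d_k)'R(B u_k + E d_k)] + (x_{N+1} − r)'P_{N+1}(x_{N+1} − r) = x_{n+1}'P_{n+1} x_{n+1} + 2 x_{n+1}'f_{n+1} + r'P_{N+1} r + Σ_{k=n+1}^N [ r'Q r + d_k'E'(R + P_{k+1})E d_k + 2 d_k'E'f_{k+1} − h_k'Υ_k^{-1}h_k ]. -/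
open Matrix Finset

theorem symm_swap {n : ℕ} {S : Matrix (Fin n) (Fin n) ℝ} (hS : Sᵀ = S) (v w : Fin n → ℝ) :
    v ⬝ᵥ (S *ᵥ w) = w ⬝ᵥ (S *ᵥ v) := by
  rw [dotProduct_mulVec, ← mulVec_transpose, hS, dotProduct_comm]

theorem dot_transpose {n m : ℕ} (B : Matrix (Fin n) (Fin m) ℝ) (v : Fin m → ℝ) (w : Fin n → ℝ) :
    v ⬝ᵥ (Bᵀ *ᵥ w) = (B *ᵥ v) ⬝ᵥ w := by
  rw [dotProduct_mulVec, vecMul_transpose]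

theorem one_step {n m : ℕ}
    (A Q R p P : Matrix (Fin n) (Fin n) ℝ) (B E : Matrix (Fin n) (Fin m) ℝ)
    (r x y f g : Fin n → ℝ) (Y : Matrix (Fin m) (Fin m) ℝ) (M : Matrix (Fin m) (Fin n) ℝ)
    (d u h : Fin m → ℝ)
    (hQ : Qᵀ = Q) (hR : Rᵀ = R) (hp : pᵀ = p)
    (hY : Y = Bᵀ * (R + p) * B) (hM : M = Bᵀ * p * A)
    (hP : P = Q + Aᵀ * p * A - Mᵀ * Y⁻¹ * M) (hYp : Y.PosDef)
    (hh : h = (Bᵀ * (R + p) * E) *ᵥ d + Bᵀ *ᵥ g)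
    (hf : f = (Aᵀ * p * E) *ᵥ d + Aᵀ *ᵥ g - Mᵀ *ᵥ (Y⁻¹ *ᵥ h) - Q *ᵥ r)
    (hu : u = -(Y⁻¹ *ᵥ (M *ᵥ x)) - Y⁻¹ *ᵥ h)
    (hy : y = A *ᵥ x + B *ᵥ u + E *ᵥ d) :
    ((x - r) ⬝ᵥ (Q *ᵥ (x - r)) + (B *ᵥ u + E *ᵥ d) ⬝ᵥ (R *ᵥ (B *ᵥ u + E *ᵥ d)))
      + (y ⬝ᵥ (p *ᵥ y) + 2 * (y ⬝ᵥ g))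
    = x ⬝ᵥ (P *ᵥ x) + 2 * (x ⬝ᵥ f) + (r ⬝ᵥ (Q *ᵥ r)
            + (E *ᵥ d) ⬝ᵥ ((R + p) *ᵥ (E *ᵥ d))
            + 2 * ((E *ᵥ d) ⬝ᵥ g) - h ⬝ᵥ (Y⁻¹ *ᵥ h)) := by
  have hYs : Yᵀ = Y := by simpa using hYp.isHermitian.eq
  have hYi : (Y⁻¹)ᵀ = Y⁻¹ := by rw [transpose_nonsing_inv, hYs]
  have hYu : IsUnit Y.det := (isUnit_iff_isUnit_det Y).1 hYp.isUnit
  have e1 : x ⬝ᵥ (P *ᵥ x) = x ⬝ᵥ (Q *ᵥ x) + (A *ᵥ x) ⬝ᵥ (p *ᵥ (A *ᵥ x))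
      - (M *ᵥ x) ⬝ᵥ (Y⁻¹ *ᵥ (M *ᵥ x)) := by
    rw [hP]
    simp only [sub_mulVec, add_mulVec, dotProduct_sub, dotProduct_add, ← mulVec_mulVec,
      dot_transpose]
  have e2 : x ⬝ᵥ f = (A *ᵥ x) ⬝ᵥ (p *ᵥ (E *ᵥ d)) + (A *ᵥ x) ⬝ᵥ g
      - (M *ᵥ x) ⬝ᵥ (Y⁻¹ *ᵥ h) - x ⬝ᵥ (Q *ᵥ r) := by
    rw [hf]
    simp only [dotProduct_sub, dotProduct_add, ← mulVec_mulVec, dot_transpose]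
  have e3 : u ⬝ᵥ (M *ᵥ x) = (B *ᵥ u) ⬝ᵥ (p *ᵥ (A *ᵥ x)) := by
    rw [hM]
    simp only [← mulVec_mulVec, dot_transpose]
  have e4 : u ⬝ᵥ h = (B *ᵥ u) ⬝ᵥ (R *ᵥ (E *ᵥ d)) + (B *ᵥ u) ⬝ᵥ (p *ᵥ (E *ᵥ d))
      + (B *ᵥ u) ⬝ᵥ g := by
    rw [hh]
    simp only [dotProduct_add, add_mulVec, ← mulVec_mulVec, dot_transpose]
  have e5 : u ⬝ᵥ (Y *ᵥ u) = (B *ᵥ u) ⬝ᵥ (R *ᵥ (B *ᵥ u)) + (B *ᵥ u) ⬝ᵥ (p *ᵥ (B *ᵥ u)) := by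
    rw [hY]
    simp only [dotProduct_add, add_mulVec, ← mulVec_mulVec, dot_transpose]
  have e6 : Y *ᵥ u = -(M *ᵥ x) - h := by
    have hc : ∀ v, Y *ᵥ (Y⁻¹ *ᵥ v) = v := fun v => by
      rw [mulVec_mulVec, mul_nonsing_inv _ hYu, one_mulVec]
    rw [hu, mulVec_sub, mulVec_neg, hc, hc]
  have e7 : u ⬝ᵥ (Y *ᵥ u) = -(u ⬝ᵥ (M *ᵥ x)) - u ⬝ᵥ h := by
    rw [e6, dotProduct_sub, dotProduct_neg]
  have e8 : u ⬝ᵥ (M *ᵥ x) = -((M *ᵥ x) ⬝ᵥ (Y⁻¹ *ᵥ (M *ᵥ x))) - (M *ᵥ x) ⬝ᵥ (Y⁻¹ *ᵥ h) := by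
    rw [dotProduct_comm]
    conv_lhs => rw [hu]
    rw [dotProduct_sub, dotProduct_neg]
  have e9 : u ⬝ᵥ h = -((M *ᵥ x) ⬝ᵥ (Y⁻¹ *ᵥ h)) - h ⬝ᵥ (Y⁻¹ *ᵥ h) := by
    rw [dotProduct_comm, symm_swap hYi (M *ᵥ x) h]
    conv_lhs => rw [hu]
    rw [dotProduct_sub, dotProduct_neg]
  clear hu hf hh hP hM hY
  rw [e1, e2, hy]
  simp only [mulVec_add, mulVec_sub, add_mulVec, dotProduct_add, dotProduct_sub, add_dotProduct,
    sub_dotProduct]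
  have s1 := symm_swap hQ r x
  have s2 := symm_swap hR (E *ᵥ d) (B *ᵥ u)
  have s3 := symm_swap hp (E *ᵥ d) (B *ᵥ u)
  have s4 := symm_swap hp (A *ᵥ x) (B *ᵥ u)
  have s5 := symm_swap hp (E *ᵥ d) (A *ᵥ x)
  linarith

/-- **Cost-to-go identity under the optimal feedback (equation (20) of the paper).**
If the optimal control law is applied from time `n₀+1` up to `N`, then the cost-to-go
`J̄_{n₀+1}` equals `x_{n₀+1}' P_{n₀+1} x_{n₀+1} + 2 x_{n₀+1}' f_{n₀+1} + r' P_{N+1} r`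
plus the stated sum of disturbance/offset terms. -/
theorem cost_to_go_identity
    (n m N : ℕ)
    (A Q R : Matrix (Fin n) (Fin n) ℝ)
    (B E : Matrix (Fin n) (Fin m) ℝ)
    (r : Fin n → ℝ)
    (hQ : Q.PosSemidef) (hR : R.PosSemidef)
    (P : ℕ → Matrix (Fin n) (Fin n) ℝ)
    (Υ : ℕ → Matrix (Fin m) (Fin m) ℝ)
    (M : ℕ → Matrix (Fin m) (Fin n) ℝ)
    (hPterm : (P (N + 1)).PosSemidef)
    (hΥ : ∀ k ≤ N, Υ k = Bᵀ * (R + P (k + 1)) * B)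
    (hM : ∀ k ≤ N, M k = Bᵀ * P (k + 1) * A)
    (hP : ∀ k ≤ N, P k = Q + Aᵀ * P (k + 1) * A - (M k)ᵀ * (Υ k)⁻¹ * M k)
    (hΥpos : ∀ k ≤ N, (Υ k).PosDef)
    (d : ℕ → Fin m → ℝ)
    (f : ℕ → Fin n → ℝ) (h : ℕ → Fin m → ℝ)
    (hfterm : f (N + 1) = -(P (N + 1) *ᵥ r))
    (hh : ∀ k ≤ N, h k = (Bᵀ * (R + P (k + 1)) * E) *ᵥ d k + Bᵀ *ᵥ f (k + 1))
    (hf : ∀ k ≤ N, f k = (Aᵀ * P (k + 1) * E) *ᵥ d k + Aᵀ *ᵥ f (k + 1)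
            - (M k)ᵀ *ᵥ ((Υ k)⁻¹ *ᵥ h k) - Q *ᵥ r)
    -- `n₀ ∈ {0,…,N−1}`
    (n₀ : ℕ) (hn₀ : n₀ + 1 ≤ N)
    (x : ℕ → Fin n → ℝ) (u : ℕ → Fin m → ℝ)
    -- the optimal control law is applied for `k ∈ {n₀+1,…,N}`
    (hu : ∀ k, n₀ + 1 ≤ k → k ≤ N →
        u k = -((Υ k)⁻¹ *ᵥ (M k *ᵥ x k)) - (Υ k)⁻¹ *ᵥ h k)
    (hx : ∀ k, n₀ + 1 ≤ k → k ≤ N →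
        x (k + 1) = A *ᵥ x k + B *ᵥ u k + E *ᵥ d k) :
    (∑ k ∈ Finset.Icc (n₀ + 1) N,
        ((x k - r) ⬝ᵥ (Q *ᵥ (x k - r))
          + (B *ᵥ u k + E *ᵥ d k) ⬝ᵥ (R *ᵥ (B *ᵥ u k + E *ᵥ d k))))
      + (x (N + 1) - r) ⬝ᵥ (P (N + 1) *ᵥ (x (N + 1) - r))
    = x (n₀ + 1) ⬝ᵥ (P (n₀ + 1) *ᵥ x (n₀ + 1)) + 2 * (x (n₀ + 1) ⬝ᵥ f (n₀ + 1))
      + r ⬝ᵥ (P (N + 1) *ᵥ r)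
      + ∑ k ∈ Finset.Icc (n₀ + 1) N,
          (r ⬝ᵥ (Q *ᵥ r)
            + (E *ᵥ d k) ⬝ᵥ ((R + P (k + 1)) *ᵥ (E *ᵥ d k))
            + 2 * ((E *ᵥ d k) ⬝ᵥ f (k + 1))
            - h k ⬝ᵥ ((Υ k)⁻¹ *ᵥ h k)) := by
  have hQs : Qᵀ = Q := by simpa using hQ.isHermitian.eq
  have hRs : Rᵀ = R := by simpa using hR.isHermitian.eq
  have hTs : (P (N + 1))ᵀ = P (N + 1) := by simpa using hPterm.isHermitian.eq
  have hPs : ∀ k ≤ N + 1, (P k)ᵀ = P k := by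
    intro k hk
    induction hk using Nat.decreasingInduction with
    | self => exact hTs
    | @of_succ k hk ih =>
      have hk' : k ≤ N := by omega
      have hYs : (Υ k)ᵀ = Υ k := by simpa using (hΥpos k hk').isHermitian.eq
      rw [hP k hk']
      simp only [transpose_sub, transpose_add, transpose_mul, transpose_transpose,
        transpose_nonsing_inv, hQs, hYs, ih, Matrix.mul_assoc]
  have tele : ∑ k ∈ Finset.Icc (n₀ + 1) N,
      ((x (k + 1) ⬝ᵥ (P (k + 1) *ᵥ x (k + 1)) + 2 * (x (k + 1) ⬝ᵥ f (k + 1)))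
        - (x k ⬝ᵥ (P k *ᵥ x k) + 2 * (x k ⬝ᵥ f k)))
      = (x (N + 1) ⬝ᵥ (P (N + 1) *ᵥ x (N + 1)) + 2 * (x (N + 1) ⬝ᵥ f (N + 1)))
        - (x (n₀ + 1) ⬝ᵥ (P (n₀ + 1) *ᵥ x (n₀ + 1)) + 2 * (x (n₀ + 1) ⬝ᵥ f (n₀ + 1))) := by
    have hI : Finset.Icc (n₀ + 1) N = Finset.Ico (n₀ + 1) (N + 1) := by
      ext k; simp only [Finset.mem_Icc, Finset.mem_Ico]; omega
    rw [hI]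
    exact Finset.sum_Ico_sub (fun k => x k ⬝ᵥ (P k *ᵥ x k) + 2 * (x k ⬝ᵥ f k)) (by omega)
  have key : ∑ k ∈ Finset.Icc (n₀ + 1) N,
        ((x k - r) ⬝ᵥ (Q *ᵥ (x k - r))
          + (B *ᵥ u k + E *ᵥ d k) ⬝ᵥ (R *ᵥ (B *ᵥ u k + E *ᵥ d k)))
      = ∑ k ∈ Finset.Icc (n₀ + 1) N,
          ((r ⬝ᵥ (Q *ᵥ r)
            + (E *ᵥ d k) ⬝ᵥ ((R + P (k + 1)) *ᵥ (E *ᵥ d k))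
            + 2 * ((E *ᵥ d k) ⬝ᵥ f (k + 1))
            - h k ⬝ᵥ ((Υ k)⁻¹ *ᵥ h k))
          - ((x (k + 1) ⬝ᵥ (P (k + 1) *ᵥ x (k + 1)) + 2 * (x (k + 1) ⬝ᵥ f (k + 1)))
        - (x k ⬝ᵥ (P k *ᵥ x k) + 2 * (x k ⬝ᵥ f k)))) := by
    refine Finset.sum_congr rfl fun k hk => ?_
    obtain ⟨h1, h2⟩ := Finset.mem_Icc.1 hk
    have := one_step A Q R (P (k + 1)) (P k) B E r (x k) (x (k + 1)) (f k) (f (k + 1)) (Υ k) (M k)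
      (d k) (u k) (h k) hQs hRs (hPs (k + 1) (by omega)) (hΥ k h2) (hM k h2) (hP k h2)
      (hΥpos k h2) (hh k h2) (hf k h2) (hu k h1 h2) (hx k h1 h2)
    linarith
  rw [key, Finset.sum_sub_distrib, tele, hfterm]
  have s := symm_swap hTs r (x (N + 1))
  simp only [mulVec_sub, dotProduct_sub, sub_dotProduct, dotProduct_neg]
  linarith
end

section
/- Suppose Q, R and P_{N+1} are positive semidefinite and that for every initial state x_0 and every disturbance sequence (d_k) the cost J_N admits a unique minimizing control sequence. Then the matrices Υ_k = B'(R + P_{k+1})B are positive definite for every k ∈ {0,…,N}, where P_k is generated by the backward Riccati recursion P_k = Q + A'P_{k+1}A − M_k'Υ_k^{-1}M_k with M_k = B'P_{k+1}A. -/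
open Matrix Finset

lemma aux_riccati {n m : ℕ} (A Q R P : Matrix (Fin n) (Fin n) ℝ) (B : Matrix (Fin n) (Fin m) ℝ)
    (U : Matrix (Fin m) (Fin m) ℝ) (M : Matrix (Fin m) (Fin n) ℝ)
    (hPt : Pᵀ = P) (hU : U = Bᵀ * (R + P) * B) (hM : M = Bᵀ * P * A) (hd : U.PosDef) :
    Q + Aᵀ * P * A - Mᵀ * U⁻¹ * M =
      Q + (B * -(U⁻¹ * M))ᵀ * R * (B * -(U⁻¹ * M))
        + (A + B * -(U⁻¹ * M))ᵀ * P * (A + B * -(U⁻¹ * M)) := by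
  obtain ⟨K, hK⟩ : ∃ K, K = -(U⁻¹ * M) := ⟨_, rfl⟩
  have hdet : IsUnit U.det := hd.det_pos.ne'.isUnit
  have h1 : U * K = -M := by
    rw [hK, Matrix.mul_neg, Matrix.mul_nonsing_inv_cancel_left _ _ hdet]
  have h2 : Mᵀ * U⁻¹ * M = -(Mᵀ * K) := by
    rw [hK, Matrix.mul_neg, neg_neg, Matrix.mul_assoc]
  have h3 : Mᵀ = Aᵀ * P * B := by
    rw [hM]; simp [Matrix.transpose_mul, hPt, Matrix.mul_assoc]
  have h4 : Kᵀ * (U * K) = -(Kᵀ * M) := by rw [h1, Matrix.mul_neg]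
  rw [h2, ← hK, h3]
  have h5 : (B * K)ᵀ * R * (B * K) + (A + B * K)ᵀ * P * (A + B * K)
      = Aᵀ * P * A + Aᵀ * P * B * K + Kᵀ * M + Kᵀ * (U * K) := by
    rw [hM, hU]
    simp only [Matrix.transpose_add, Matrix.transpose_mul, Matrix.mul_add, Matrix.add_mul,
      Matrix.mul_assoc]
    abel
  rw [add_assoc Q ((B * K)ᵀ * R * (B * K)), h5, h4]
  abel

lemma aux_quad {n p : ℕ} (X : Matrix (Fin n) (Fin n) ℝ) (C : Matrix (Fin n) (Fin p) ℝ)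
    (y : Fin p → ℝ) :
    y ⬝ᵥ ((Cᵀ * X * C) *ᵥ y) = (C *ᵥ y) ⬝ᵥ (X *ᵥ (C *ᵥ y)) := by
  rw [← Matrix.mulVec_mulVec, ← Matrix.mulVec_mulVec, Matrix.dotProduct_mulVec,
    Matrix.vecMul_transpose]

lemma aux_nonneg {n : ℕ} {X : Matrix (Fin n) (Fin n) ℝ} (h : X.PosSemidef) (y : Fin n → ℝ) :
    0 ≤ y ⬝ᵥ (X *ᵥ y) := by
  simpa using h.dotProduct_mulVec_nonneg y

lemma aux_shift {n : ℕ} {X : Matrix (Fin n) (Fin n) ℝ} (h : X.PosSemidef) (x y : Fin n → ℝ)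
    (h0 : y ⬝ᵥ (X *ᵥ y) = 0) : (x + y) ⬝ᵥ (X *ᵥ (x + y)) = x ⬝ᵥ (X *ᵥ x) := by
  have h1 : X *ᵥ y = 0 := (h.dotProduct_mulVec_zero_iff y).1 (by simpa using h0)
  have ht : Xᵀ = X := by simpa using h.isHermitian.eq
  have h2 : y ⬝ᵥ (X *ᵥ x) = 0 := by
    rw [Matrix.dotProduct_mulVec, ← Matrix.mulVec_transpose, ht, h1, zero_dotProduct]
  rw [Matrix.mulVec_add, h1, add_zero, add_dotProduct, h2, add_zero]

/-- **Necessity part of the finite-horizon solvability theorem.**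
If for every initial state and every disturbance sequence the cost `J_N` admits a unique
minimizing control sequence, then the matrices `Υ_k = B'(R + P_{k+1})B` generated by the
backward Riccati recursion are positive definite for every `k ∈ {0,…,N}`. -/
theorem necessity_posDef_of_unique_solvability
    (n m N : ℕ)
    (A Q R : Matrix (Fin n) (Fin n) ℝ)
    (B E : Matrix (Fin n) (Fin m) ℝ)
    (r : Fin n → ℝ)
    (hQ : Q.PosSemidef) (hR : R.PosSemidef)
    (P : ℕ → Matrix (Fin n) (Fin n) ℝ)
    (Υ : ℕ → Matrix (Fin m) (Fin m) ℝ)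
    (M : ℕ → Matrix (Fin m) (Fin n) ℝ)
    (hPterm : (P (N + 1)).PosSemidef)
    (hΥ : ∀ k ≤ N, Υ k = Bᵀ * (R + P (k + 1)) * B)
    (hM : ∀ k ≤ N, M k = Bᵀ * P (k + 1) * A)
    (hP : ∀ k ≤ N, P k = Q + Aᵀ * P (k + 1) * A - (M k)ᵀ * (Υ k)⁻¹ * M k)
    -- the cost functional `J_N` for disturbance `d`, trajectory `x` and control `u`
    (J : (ℕ → Fin m → ℝ) → (ℕ → Fin n → ℝ) → (ℕ → Fin m → ℝ) → ℝ)
    (hJ : ∀ d x u, J d x u =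
        (∑ k ∈ range (N + 1),
          ((x k - r) ⬝ᵥ (Q *ᵥ (x k - r))
            + (B *ᵥ u k + E *ᵥ d k) ⬝ᵥ (R *ᵥ (B *ᵥ u k + E *ᵥ d k))))
        + (x (N + 1) - r) ⬝ᵥ (P (N + 1) *ᵥ (x (N + 1) - r)))
    -- `IsMin d x0 u` : `u` is a minimizing control for initial state `x0` and disturbance `d`
    (IsMin : (ℕ → Fin m → ℝ) → (Fin n → ℝ) → (ℕ → Fin m → ℝ) → Prop)
    (hIsMin : ∀ d x0 u, IsMin d x0 u ↔
        ∃ x : ℕ → Fin n → ℝ, x 0 = x0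
          ∧ (∀ k ≤ N, x (k + 1) = A *ᵥ x k + B *ᵥ u k + E *ᵥ d k)
          ∧ ∀ (u' : ℕ → Fin m → ℝ) (x' : ℕ → Fin n → ℝ),
              x' 0 = x0 → (∀ k ≤ N, x' (k + 1) = A *ᵥ x' k + B *ᵥ u' k + E *ᵥ d k) →
              J d x u ≤ J d x' u')
    -- for every initial state and disturbance there exists a unique minimizing control
    (hexists : ∀ (d : ℕ → Fin m → ℝ) (x0 : Fin n → ℝ), ∃ u, IsMin d x0 u)
    (huniq : ∀ (d : ℕ → Fin m → ℝ) (x0 : Fin n → ℝ) (u u' : ℕ → Fin m → ℝ),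
        IsMin d x0 u → IsMin d x0 u' → ∀ k ≤ N, u k = u' k) :
    ∀ k ≤ N, (Υ k).PosDef := by
  have key : ∀ k, k ≤ N + 1 → (P k).PosSemidef ∧ ∀ j, k ≤ j → j ≤ N → (Υ j).PosDef := by
    intro k hk
    induction hk using Nat.decreasingInduction with
    | self => exact ⟨hPterm, fun j h1 h2 => by omega⟩
    | of_succ k hk ih =>
      have hkN : k ≤ N := by omega
      obtain ⟨hPk, hlater⟩ := ih
      have hsemi : (Υ k).PosSemidef := by
        rw [hΥ k hkN]
        simpa using (hR.add hPk).conjTranspose_mul_mul_same B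
      have hpd : (Υ k).PosDef := by
        by_contra hnot
        have hv : ∃ v : Fin m → ℝ, v ≠ 0 ∧ v ⬝ᵥ (Υ k *ᵥ v) = 0 := by
          by_contra hcon
          push Not at hcon
          apply hnot
          refine Matrix.PosDef.of_dotProduct_mulVec_pos hsemi.isHermitian ?_
          intro v hv
          have := aux_nonneg hsemi v
          have h2 := hcon v hv
          simpa using lt_of_le_of_ne this h2.symm
        obtain ⟨v, hv0, hv⟩ := hv
        -- symmetric P at all later times
        have hPsym : ∀ t, t ≤ N + 1 → k + 1 ≤ t → (P t)ᵀ = P t := by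
          intro t ht
          induction ht using Nat.decreasingInduction with
          | self => intro _; simpa using hPterm.isHermitian.eq
          | of_succ t ht iht =>
            intro hkt
            have h1 := iht (by omega)
            have hUs : (Υ t)ᵀ = Υ t := by simpa using (hlater t hkt (by omega)).isHermitian.eq
            have hQs : Qᵀ = Q := by simpa using hQ.isHermitian.eq
            rw [hP t (by omega)]
            simp [Matrix.transpose_mul, Matrix.transpose_nonsing_inv, h1, hUs, hQs,
              Matrix.mul_assoc]
        obtain ⟨w, hw⟩ : ∃ w : ℕ → (Fin n → ℝ) → (Fin m → ℝ), w = fun j y =>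
          if j < k then 0 else if j = k then v else (-((Υ j)⁻¹ * M j)) *ᵥ y := ⟨_, rfl⟩
        obtain ⟨y, hy0, hys⟩ : ∃ y : ℕ → Fin n → ℝ, y 0 = 0 ∧
            ∀ j, y (j + 1) = A *ᵥ y j + B *ᵥ w j (y j) :=
          ⟨fun j => Nat.rec 0 (fun j z => A *ᵥ z + B *ᵥ w j z) j, rfl, fun _ => rfl⟩
        have hyz : ∀ j, j ≤ k → y j = 0 := by
          intro j
          induction j with
          | zero => intro _; exact hy0
          | succ j ihj =>
            intro hj
            rw [hys, ihj (by omega), hw]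
            simp [show j < k by omega]
        have hwk : w k (y k) = v := by simp [hw]
        obtain ⟨c, hc⟩ : ∃ c : ℕ → ℝ, c = fun j => y j ⬝ᵥ (Q *ᵥ y j)
          + (B *ᵥ w j (y j)) ⬝ᵥ (R *ᵥ (B *ᵥ w j (y j))) := ⟨_, rfl⟩
        have hcost : ∀ t, k + 1 ≤ t → t ≤ N + 1 →
            (∑ j ∈ range t, c j) + y t ⬝ᵥ (P t *ᵥ y t) = 0 := by
          intro t ht
          induction t, ht using Nat.le_induction with
          | base =>
            intro _
            rw [sum_range_succ, sum_eq_zero, hys, hyz k le_rfl]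
            · rw [hc]
              simp only [hwk, hyz k le_rfl]
              rw [hΥ k hkN, aux_quad, Matrix.add_mulVec, dotProduct_add] at hv
              simpa [hw] using hv
            · intro j hj
              have hj := mem_range.1 hj
              rw [hc]
              simp [hyz j hj.le, hw, hj]
          | succ t ht iht =>
            intro htN
            have h1 := iht (by omega)
            have htN' : t ≤ N := by omega
            rw [sum_range_succ, ← h1]
            have hr := aux_riccati A Q R (P (t + 1)) B (Υ t) (M t)
              (hPsym _ htN (by omega)) (hΥ t htN') (hM t htN') (hlater t ht htN')
            rw [← hP t htN'] at hr
            have hwt : w t (y t) = (-((Υ t)⁻¹ * M t)) *ᵥ y t := by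
              simp [hw, show ¬ t < k by omega, show t ≠ k by omega]
            rw [hr, Matrix.add_mulVec, Matrix.add_mulVec, dotProduct_add, dotProduct_add,
              aux_quad, aux_quad, Matrix.add_mulVec, ← Matrix.mulVec_mulVec, ← hwt, ← hys, hc]
            ring
        have hfin := hcost (N + 1) (by omega) le_rfl
        have hcn : ∀ j, 0 ≤ c j := fun j => by
          rw [hc]; exact add_nonneg (aux_nonneg hQ _) (aux_nonneg hR _)
        have hT := aux_nonneg hPterm (y (N + 1))
        have hS : 0 ≤ ∑ j ∈ range (N + 1), c j := sum_nonneg fun j _ => hcn j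
        have hT0 : y (N + 1) ⬝ᵥ (P (N + 1) *ᵥ y (N + 1)) = 0 := by linarith
        have hS0 : ∑ j ∈ range (N + 1), c j = 0 := by linarith
        have hc0 := (sum_eq_zero_iff_of_nonneg fun j _ => hcn j).1 hS0
        obtain ⟨u, hu⟩ := hexists 0 0
        obtain ⟨x, hx0, hxs, hxm⟩ := (hIsMin _ _ _).1 hu
        have hu' : IsMin 0 0 (fun j => u j + w j (y j)) := by
          rw [hIsMin]
          refine ⟨fun j => x j + y j, by simp [hx0, hy0], ?_, ?_⟩
          · intro j hj
            simp only [hxs j hj, hys j, Matrix.mulVec_add]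
            abel
          · intro u' x' h1 h2
            refine le_trans (le_of_eq ?_) (hxm u' x' h1 h2)
            rw [hJ, hJ]
            congr 1
            · refine sum_congr rfl fun j hj => ?_
              have h0 := hc0 j hj
              rw [hc] at h0
              have hq := aux_nonneg hQ (y j)
              have hr := aux_nonneg hR (B *ᵥ w j (y j))
              have e1 := aux_shift hQ (x j - r) (y j) (by linarith)
              have e2 := aux_shift hR (B *ᵥ u j + E *ᵥ (0 : ℕ → Fin m → ℝ) j)
                (B *ᵥ w j (y j)) (by linarith)
              rw [← e1, ← e2, Matrix.mulVec_add, add_sub_right_comm, add_right_comm]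
            · rw [add_sub_right_comm]
              exact aux_shift hPterm _ _ hT0
        have := huniq 0 0 _ _ hu hu' k hkN
        simp only [hwk] at this
        exact hv0 (by simpa using this)
      refine ⟨?_, fun j h1 h2 => ?_⟩
      · rw [hP k hkN, aux_riccati A Q R (P (k + 1)) B (Υ k) (M k)
          (by simpa using hPk.isHermitian.eq) (hΥ k hkN) (hM k hkN) hpd]
        refine (hQ.add ?_).add ?_
        · simpa only [Matrix.conjTranspose_eq_transpose_of_trivial] using
            hR.conjTranspose_mul_mul_same (B * -((Υ k)⁻¹ * M k))
        · simpa only [Matrix.conjTranspose_eq_transpose_of_trivial] using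
            hPk.conjTranspose_mul_mul_same (A + B * -((Υ k)⁻¹ * M k))
      · rcases Nat.eq_or_lt_of_le h1 with rfl | h
        · exact hpd
        · exact hlater j h h2
  intro k hk
  exact (key k (by omega)).2 k le_rfl hk
end

section
/- Suppose Υ_k is positive definite for every k ∈ {0,…,N}. Fix x_0 and (d_k), and define the closed-loop sequences by u_k = −Υ_k^{-1}M_k x_k − Υ_k^{-1}h_k, x_{k+1} = A x_k + B u_k + E d_k, and the costate λ_k := P_{k+1} x_{k+1} + f_{k+1} for k = 0,…,N. Then these sequences satisfy the forward–backward difference equations: 0 = B'R B u_k + B'λ_k + B'R E d_k for all k ∈ {0,…,N}; λ_{k-1} = Q(x_k − r) + A'λ_k for all k ∈ {1,…,N}; and λ_N = P_{N+1}(x_{N+1} − r). -/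
open Matrix Finset

/-- **The closed-loop sequences solve the forward–backward difference equations.**
With `u_k = −Υ_k⁻¹ M_k x_k − Υ_k⁻¹ h_k`, `x_{k+1} = A x_k + B u_k + E d_k` and the
costate `λ_k = P_{k+1} x_{k+1} + f_{k+1}`, the FBDEs of the maximum principle hold:
`0 = B'R B u_k + B'λ_k + B'R E d_k`, `λ_{k-1} = Q(x_k − r) + A'λ_k`, and
`λ_N = P_{N+1}(x_{N+1} − r)`. -/
theorem closed_loop_satisfies_FBDEs
    (n m N : ℕ)
    (A Q R : Matrix (Fin n) (Fin n) ℝ)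
    (B E : Matrix (Fin n) (Fin m) ℝ)
    (r : Fin n → ℝ)
    (hQ : Q.PosSemidef) (hR : R.PosSemidef)
    (P : ℕ → Matrix (Fin n) (Fin n) ℝ)
    (Υ : ℕ → Matrix (Fin m) (Fin m) ℝ)
    (M : ℕ → Matrix (Fin m) (Fin n) ℝ)
    (hPterm : (P (N + 1)).PosSemidef)
    (hΥ : ∀ k ≤ N, Υ k = Bᵀ * (R + P (k + 1)) * B)
    (hM : ∀ k ≤ N, M k = Bᵀ * P (k + 1) * A)
    (hP : ∀ k ≤ N, P k = Q + Aᵀ * P (k + 1) * A - (M k)ᵀ * (Υ k)⁻¹ * M k)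
    (hΥpos : ∀ k ≤ N, (Υ k).PosDef)
    (d : ℕ → Fin m → ℝ)
    (f : ℕ → Fin n → ℝ) (h : ℕ → Fin m → ℝ)
    (hfterm : f (N + 1) = -(P (N + 1) *ᵥ r))
    (hh : ∀ k ≤ N, h k = (Bᵀ * (R + P (k + 1)) * E) *ᵥ d k + Bᵀ *ᵥ f (k + 1))
    (hf : ∀ k ≤ N, f k = (Aᵀ * P (k + 1) * E) *ᵥ d k + Aᵀ *ᵥ f (k + 1)
            - (M k)ᵀ *ᵥ ((Υ k)⁻¹ *ᵥ h k) - Q *ᵥ r)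
    -- the closed-loop state, control and costate sequences
    (x : ℕ → Fin n → ℝ) (u : ℕ → Fin m → ℝ) (lam : ℕ → Fin n → ℝ)
    (hu : ∀ k ≤ N, u k = -((Υ k)⁻¹ *ᵥ (M k *ᵥ x k)) - (Υ k)⁻¹ *ᵥ h k)
    (hx : ∀ k ≤ N, x (k + 1) = A *ᵥ x k + B *ᵥ u k + E *ᵥ d k)
    (hlam : ∀ k ≤ N, lam k = P (k + 1) *ᵥ x (k + 1) + f (k + 1)) :
    (∀ k ≤ N, 0 = (Bᵀ * R * B) *ᵥ u k + Bᵀ *ᵥ lam k + (Bᵀ * R * E) *ᵥ d k)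
    ∧ (∀ k, 1 ≤ k → k ≤ N → lam (k - 1) = Q *ᵥ (x k - r) + Aᵀ *ᵥ lam k)
    ∧ lam N = P (N + 1) *ᵥ (x (N + 1) - r) := by
  have hsym : ∀ j ≤ N + 1, (P (N + 1 - j))ᵀ = P (N + 1 - j) := by
    intro j
    induction j with
    | zero =>
      intro _
      have := hPterm.1.eq
      rwa [conjTranspose_eq_transpose_of_trivial] at this
    | succ j ih =>
      intro hj
      have ih := ih (by omega)
      have e : N + 1 - j = (N + 1 - (j + 1)) + 1 := by omega
      rw [e] at ih
      generalize hk : N + 1 - (j + 1) = k at *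
      have hkN : k ≤ N := by omega
      have hQs := hQ.1.eq
      have hUs := (hΥpos k hkN).1.eq
      rw [conjTranspose_eq_transpose_of_trivial] at hQs hUs
      rw [hP k hkN]
      simp only [transpose_add, transpose_sub, transpose_mul, transpose_transpose,
        transpose_nonsing_inv, hQs, hUs, ih, Matrix.mul_assoc]
  have hPs : ∀ k ≤ N, (P (k + 1))ᵀ = P (k + 1) := by
    intro k hk
    have := hsym (N - k) (by omega)
    have e : N + 1 - (N - k) = k + 1 := by omega
    rwa [e] at this
  refine ⟨?_, ?_, ?_⟩
  · intro k hk
    have hdet : IsUnit (Υ k).det := (hΥpos k hk).det_pos.ne'.isUnit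
    have h1 : Υ k *ᵥ u k = -(M k *ᵥ x k) - h k := by
      rw [hu k hk, mulVec_sub, mulVec_neg, mulVec_mulVec (h k),
        mulVec_mulVec (M k *ᵥ x k), mul_nonsing_inv _ hdet, one_mulVec, one_mulVec]
    rw [hΥ k hk, hM k hk, hh k hk] at h1
    rw [hlam k hk, hx k hk]
    simp only [Matrix.mul_add, Matrix.add_mul, add_mulVec, mulVec_add, ← mulVec_mulVec] at h1 ⊢
    have h2 := sub_eq_zero.mpr h1
    rw [← h2]
    abel
  · intro k h1 hk
    have e : k - 1 + 1 = k := by omega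
    have hMt : (M k)ᵀ = Aᵀ * P (k + 1) * B := by
      rw [hM k hk]
      simp only [transpose_mul, transpose_transpose, hPs k hk, Matrix.mul_assoc]
    have h2 : (M k)ᵀ *ᵥ u k = -((M k)ᵀ *ᵥ ((Υ k)⁻¹ *ᵥ (M k *ᵥ x k)))
        - (M k)ᵀ *ᵥ ((Υ k)⁻¹ *ᵥ h k) := by
      rw [hu k hk, mulVec_sub, mulVec_neg]
    have h3 := h2
    rw [hlam (k - 1) (by omega), e, hlam k hk, hx k hk, hf k hk, hP k hk]
    nth_rewrite 1 [hMt] at h3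
    simp only [mulVec_add, mulVec_sub, add_mulVec, sub_mulVec, ← mulVec_mulVec] at h3 ⊢
    rw [h3]
    abel
  · rw [hlam N le_rfl, hfterm, mulVec_sub, sub_eq_add_neg]
end

section
/- Suppose Υ_k is positive definite for every k ∈ {0,…,N}. Define Ā_k = A − B Υ_k^{-1} M_k, F_k = (Ā_k' P_{k+1} − M_k'Υ_k^{-1}B'R)E, H_k = B'(R + P_{k+1})E, and the backward recursion 𝓡_k = Ā_k' 𝓡_{k+1} + Q with 𝓡_{N+1} = P_{N+1}. Then the solutions of the backward equations for f and h admit the explicit representations f_k = Σ_{s=k}^N (Ā_k' Ā_{k+1}' ⋯ Ā_{s-1}') F_s d_s − 𝓡_k r (the matrix product being the identity when s = k) and h_k = H_k d_k + B' [ Σ_{s=k+1}^N (Ā_{k+1}' ⋯ Ā_{s-1}') F_s d_s − 𝓡_{k+1} r ] for all k ∈ {0,…,N}. -/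
open Matrix

/-- The ordered transpose product `Ā_k' Ā_{k+1}' ⋯ Ā_{s-1}'` (the identity when `s ≤ k`). -/
noncomputable def transProd {n : ℕ} (Ab : ℕ → Matrix (Fin n) (Fin n) ℝ) (k s : ℕ) :
    Matrix (Fin n) (Fin n) ℝ :=
  ((List.range (s - k)).map fun j => (Ab (k + j))ᵀ).prod

/-- **Explicit representation of the feedforward terms `f_k` and `h_k` (Remark 6).**
With `Ā_k = A − B Υ_k⁻¹ M_k`, `F_k = (Ā_k' P_{k+1} − M_k'Υ_k⁻¹B'R)E`,
`H_k = B'(R + P_{k+1})E` and `𝓡_k = Ā_k'𝓡_{k+1} + Q`, `𝓡_{N+1} = P_{N+1}`, one has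
`f_k = Σ_{s=k}^N Ā_k'⋯Ā_{s-1}' F_s d_s − 𝓡_k r` and
`h_k = H_k d_k + B'[Σ_{s=k+1}^N Ā_{k+1}'⋯Ā_{s-1}' F_s d_s − 𝓡_{k+1} r]`. -/
theorem explicit_representation_f_h
    (n m N : ℕ)
    (A Q R : Matrix (Fin n) (Fin n) ℝ)
    (B E : Matrix (Fin n) (Fin m) ℝ)
    (r : Fin n → ℝ)
    (hQ : Q.PosSemidef) (hR : R.PosSemidef)
    (P : ℕ → Matrix (Fin n) (Fin n) ℝ)
    (Υ : ℕ → Matrix (Fin m) (Fin m) ℝ)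
    (M : ℕ → Matrix (Fin m) (Fin n) ℝ)
    (hPterm : (P (N + 1)).PosSemidef)
    (hΥ : ∀ k ≤ N, Υ k = Bᵀ * (R + P (k + 1)) * B)
    (hM : ∀ k ≤ N, M k = Bᵀ * P (k + 1) * A)
    (hP : ∀ k ≤ N, P k = Q + Aᵀ * P (k + 1) * A - (M k)ᵀ * (Υ k)⁻¹ * M k)
    (hΥpos : ∀ k ≤ N, (Υ k).PosDef)
    (d : ℕ → Fin m → ℝ)
    (f : ℕ → Fin n → ℝ) (h : ℕ → Fin m → ℝ)
    (hfterm : f (N + 1) = -(P (N + 1) *ᵥ r))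
    (hh : ∀ k ≤ N, h k = (Bᵀ * (R + P (k + 1)) * E) *ᵥ d k + Bᵀ *ᵥ f (k + 1))
    (hf : ∀ k ≤ N, f k = (Aᵀ * P (k + 1) * E) *ᵥ d k + Aᵀ *ᵥ f (k + 1)
            - (M k)ᵀ *ᵥ ((Υ k)⁻¹ *ᵥ h k) - Q *ᵥ r)
    (Ab : ℕ → Matrix (Fin n) (Fin n) ℝ)
    (F : ℕ → Matrix (Fin n) (Fin m) ℝ)
    (H : ℕ → Matrix (Fin m) (Fin m) ℝ)
    (𝓡 : ℕ → Matrix (Fin n) (Fin n) ℝ)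
    (hAb : ∀ k ≤ N, Ab k = A - B * ((Υ k)⁻¹ * M k))
    (hF : ∀ k ≤ N, F k = ((Ab k)ᵀ * P (k + 1) - (M k)ᵀ * (Υ k)⁻¹ * Bᵀ * R) * E)
    (hH : ∀ k ≤ N, H k = Bᵀ * (R + P (k + 1)) * E)
    (h𝓡term : 𝓡 (N + 1) = P (N + 1))
    (h𝓡 : ∀ k ≤ N, 𝓡 k = (Ab k)ᵀ * 𝓡 (k + 1) + Q) :
    (∀ k ≤ N,
        f k = (∑ s ∈ Finset.Icc k N, transProd Ab k s *ᵥ (F s *ᵥ d s)) - 𝓡 k *ᵥ r)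
    ∧ (∀ k ≤ N,
        h k = H k *ᵥ d k
          + Bᵀ *ᵥ ((∑ s ∈ Finset.Icc (k + 1) N, transProd Ab (k + 1) s *ᵥ (F s *ᵥ d s))
              - 𝓡 (k + 1) *ᵥ r)) := by
  have step : ∀ k ≤ N, f k = F k *ᵥ d k + (Ab k)ᵀ *ᵥ f (k + 1) - Q *ᵥ r := by
    intro k hk
    have hsym : ((Υ k)⁻¹)ᵀ = (Υ k)⁻¹ := by
      have h1 : (Υ k)ᵀ = Υ k := by
        have h2 := (hΥpos k hk).isHermitian.eq
        rwa [Matrix.conjTranspose_eq_transpose_of_trivial] at h2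
      rw [Matrix.transpose_nonsing_inv, h1]
    have hAbT : (Ab k)ᵀ = Aᵀ - (M k)ᵀ * (Υ k)⁻¹ * Bᵀ := by
      rw [hAb k hk, Matrix.transpose_sub, Matrix.transpose_mul, Matrix.transpose_mul, hsym]
    rw [hf k hk, hh k hk, hF k hk, hAbT]
    simp only [Matrix.mulVec_add, Matrix.mulVec_mulVec, Matrix.sub_mulVec, Matrix.add_mul,
      Matrix.mul_add, Matrix.sub_mul, Matrix.add_mulVec, Matrix.mul_assoc]
    abel
  have tself : ∀ k, transProd Ab k k = 1 := by
    intro k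
    simp [transProd]
  have tsucc : ∀ k s, k + 1 ≤ s → transProd Ab k s = (Ab k)ᵀ * transProd Ab (k + 1) s := by
    intro k s hs
    unfold transProd
    have e : s - k = (s - (k + 1)) + 1 := by omega
    rw [e, List.range_succ_eq_map, List.map_cons, List.prod_cons, List.map_map]
    congr 3
    funext j
    simp only [Function.comp, Nat.succ_eq_add_one]
    congr 2
    omega
  have main : ∀ j k, k + j = N + 1 →
      f k = (∑ s ∈ Finset.Icc k N, transProd Ab k s *ᵥ (F s *ᵥ d s)) - 𝓡 k *ᵥ r := by
    intro j
    induction j with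
    | zero =>
      intro k hk
      obtain rfl : k = N + 1 := by omega
      rw [hfterm, h𝓡term]
      simp
    | succ j ih =>
      intro k hk
      have hkN : k ≤ N := by omega
      rw [step k hkN, ih (k + 1) (by omega), h𝓡 k hkN,
        ← Finset.add_sum_Ioc_eq_sum_Icc hkN, tself, Matrix.one_mulVec,
        ← Finset.Icc_add_one_left_eq_Ioc]
      have hs : ∑ s ∈ Finset.Icc (k + 1) N, transProd Ab k s *ᵥ (F s *ᵥ d s)
          = (Ab k)ᵀ *ᵥ ∑ s ∈ Finset.Icc (k + 1) N, transProd Ab (k + 1) s *ᵥ (F s *ᵥ d s) := by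
        rw [Matrix.mulVec_sum]
        refine Finset.sum_congr rfl fun s hs => ?_
        rw [tsucc k s (Finset.mem_Icc.mp hs).1, Matrix.mulVec_mulVec (M := (Ab k)ᵀ)]
      rw [hs, Matrix.mulVec_sub, Matrix.add_mulVec, Matrix.mulVec_mulVec (v := r)]
      abel
  refine ⟨fun k hk => main (N + 1 - k) k (by omega), fun k hk => ?_⟩
  rw [hh k hk, hH k hk, ← main (N - k) (k + 1) (by omega)]
end

section
/- Suppose the general difference Riccati equation P_k = Q + A'P_{k+1}A − M_k'Υ_k^†M_k (with Υ_k = B'(R + P_{k+1})B, M_k = B'P_{k+1}A, terminal value P_{N+1} = 0, and Υ_k^† the Moore–Penrose pseudo-inverse) satisfies the regular condition Υ_k Υ_k^† M_k = M_k and Υ_k Υ_k^† h_k = h_k for all k ∈ {0,…,N}, where h_k, f_k are given by h_k = B'(R + P_{k+1})E d_k + B'f_{k+1}, f_k = A'P_{k+1}E d_k + A'f_{k+1} − M_k'Υ_k^†h_k − Q r, f_{N+1} = −P_{N+1} r. Then the controller u_k = −Υ_k^† M_k x_k − Υ_k^† h_k minimizes J_N, and the optimal cost equals J_N^* = x_0'P_0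 x_0 + 2 x_0'f_0 + Σ_{k=0}^N [ r'Q r + d_k'E'(R + P_{k+1})E d_k + 2 d_k'E'f_{k+1} − h_k'Υ_k^†h_k ]. -/
open Matrix Finset Classical

/-- `Y` satisfies the four Moore–Penrose conditions for `M`. -/
def IsMoorePenroseInv {m : ℕ} (M Y : Matrix (Fin m) (Fin m) ℝ) : Prop :=
  M * Y * M = M ∧ Y * M * Y = Y ∧ (M * Y)ᵀ = M * Y ∧ (Y * M)ᵀ = Y * M

/-- The Moore–Penrose pseudo-inverse of a real square matrix (it always exists and is
unique, so this classical choice picks it out). -/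
noncomputable def mpinv {m : ℕ} (M : Matrix (Fin m) (Fin m) ℝ) : Matrix (Fin m) (Fin m) ℝ :=
  if h : ∃ Y, IsMoorePenroseInv M Y then h.choose else 0


theorem symm_swap_aux {n : ℕ} {P : Matrix (Fin n) (Fin n) ℝ} (hP : Pᵀ = P) (a b : Fin n → ℝ) :
    a ⬝ᵥ (P *ᵥ b) = b ⬝ᵥ (P *ᵥ a) := by
  rw [dotProduct_mulVec, ← mulVec_transpose, hP, dotProduct_comm]

theorem tr_aux {n m : ℕ} (B : Matrix (Fin n) (Fin m) ℝ) (z : Fin m → ℝ) (w : Fin n → ℝ) :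
    z ⬝ᵥ (Bᵀ *ᵥ w) = (B *ᵥ z) ⬝ᵥ w := by
  rw [dotProduct_mulVec, vecMul_transpose]

/-- One-step completion of squares. -/
theorem step_aux {n m : ℕ} (A Q R P P' : Matrix (Fin n) (Fin n) ℝ) (B E : Matrix (Fin n) (Fin m) ℝ)
    (U Y : Matrix (Fin m) (Fin m) ℝ) (M : Matrix (Fin m) (Fin n) ℝ)
    (hQ : Qᵀ = Q) (hR : Rᵀ = R) (hP : Pᵀ = P)
    (hU : U = Bᵀ * (R + P) * B) (hM : M = Bᵀ * P * A)
    (hP' : P' = Q + Aᵀ * P * A - Mᵀ * Y * M)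
    (r x f f' : Fin n → ℝ) (d h u : Fin m → ℝ)
    (hh : h = (Bᵀ * (R + P) * E) *ᵥ d + Bᵀ *ᵥ f)
    (hf : f' = (Aᵀ * P * E) *ᵥ d + Aᵀ *ᵥ f - Mᵀ *ᵥ (Y *ᵥ h) - Q *ᵥ r)
    (hrM : U * Y * M = M) (hrh : (U * Y) *ᵥ h = h) :
    (x - r) ⬝ᵥ (Q *ᵥ (x - r)) + (B *ᵥ u + E *ᵥ d) ⬝ᵥ (R *ᵥ (B *ᵥ u + E *ᵥ d))
      + (A *ᵥ x + B *ᵥ u + E *ᵥ d) ⬝ᵥ (P *ᵥ (A *ᵥ x + B *ᵥ u + E *ᵥ d))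
      + 2 * ((A *ᵥ x + B *ᵥ u + E *ᵥ d) ⬝ᵥ f)
    = x ⬝ᵥ (P' *ᵥ x) + 2 * (x ⬝ᵥ f')
      + (r ⬝ᵥ (Q *ᵥ r) + (E *ᵥ d) ⬝ᵥ ((R + P) *ᵥ (E *ᵥ d)) + 2 * ((E *ᵥ d) ⬝ᵥ f) - h ⬝ᵥ (Y *ᵥ h))
      + (u + Y *ᵥ (M *ᵥ x) + Y *ᵥ h) ⬝ᵥ (U *ᵥ (u + Y *ᵥ (M *ᵥ x) + Y *ᵥ h)) := by
  have hUs : Uᵀ = U := by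
    rw [hU]; simp [Matrix.transpose_mul, hR, hP, Matrix.mul_assoc]
  have e1 : x ⬝ᵥ (P' *ᵥ x) = x ⬝ᵥ (Q *ᵥ x) + (A *ᵥ x) ⬝ᵥ (P *ᵥ (A *ᵥ x))
      - (M *ᵥ x) ⬝ᵥ (Y *ᵥ (M *ᵥ x)) := by
    rw [hP']
    simp only [sub_mulVec, add_mulVec, ← mulVec_mulVec, dotProduct_sub, dotProduct_add, tr_aux]
  have e2 : x ⬝ᵥ f' = (A *ᵥ x) ⬝ᵥ (P *ᵥ (E *ᵥ d)) + (A *ᵥ x) ⬝ᵥ f - (M *ᵥ x) ⬝ᵥ (Y *ᵥ h)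
      - x ⬝ᵥ (Q *ᵥ r) := by
    rw [hf]
    simp only [← mulVec_mulVec, dotProduct_sub, dotProduct_add, tr_aux]
  have e3 : u ⬝ᵥ (U *ᵥ u) = (B *ᵥ u) ⬝ᵥ (R *ᵥ (B *ᵥ u)) + (B *ᵥ u) ⬝ᵥ (P *ᵥ (B *ᵥ u)) := by
    rw [hU]
    simp only [← mulVec_mulVec, add_mulVec, dotProduct_add, tr_aux]
  have e4 : u ⬝ᵥ (M *ᵥ x) = (B *ᵥ u) ⬝ᵥ (P *ᵥ (A *ᵥ x)) := by
    rw [hM]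
    simp only [← mulVec_mulVec, tr_aux]
  have e5 : u ⬝ᵥ h = (B *ᵥ u) ⬝ᵥ (R *ᵥ (E *ᵥ d)) + (B *ᵥ u) ⬝ᵥ (P *ᵥ (E *ᵥ d))
      + (B *ᵥ u) ⬝ᵥ f := by
    rw [hh]
    simp only [← mulVec_mulVec, add_mulVec, dotProduct_add, tr_aux]
  have w1 : U *ᵥ (Y *ᵥ (M *ᵥ x)) = M *ᵥ x := by
    rw [mulVec_mulVec, mulVec_mulVec, hrM]
  have w2 : U *ᵥ (Y *ᵥ h) = h := by rw [mulVec_mulVec, hrh]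
  clear hrM hrh hh hf hP' hM hU
  generalize M *ᵥ x = g at *
  generalize Y *ᵥ g = w at *
  generalize Y *ᵥ h = v at *
  have s1 := symm_swap_aux hUs w u
  have s2 := symm_swap_aux hUs v u
  have s3 := symm_swap_aux hUs v w
  rw [w1] at s1 s3
  rw [w2] at s2 s3
  have q1 := symm_swap_aux hQ r x
  have r1 := symm_swap_aux hR (E *ᵥ d) (B *ᵥ u)
  have p1 := symm_swap_aux hP (E *ᵥ d) (B *ᵥ u)
  have p2 := symm_swap_aux hP (E *ᵥ d) (A *ᵥ x)
  have p3 := symm_swap_aux hP (A *ᵥ x) (B *ᵥ u)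
  have c1 := dotProduct_comm g w
  have c2 := dotProduct_comm g v
  have c3 := dotProduct_comm h v
  rw [e1, e2]
  simp only [mulVec_add, mulVec_sub, add_mulVec, dotProduct_add, dotProduct_sub, add_dotProduct,
    sub_dotProduct, w1, w2]
  rw [s1, s2, q1, r1, p1, p2, p3, c1, c2, c3, e3, e4, e5, s3]
  ring

/-- One-step propagation of symmetry and positivity. -/
theorem psd_aux {n m : ℕ} (A Q R P P' : Matrix (Fin n) (Fin n) ℝ) (B : Matrix (Fin n) (Fin m) ℝ)
    (U Y : Matrix (Fin m) (Fin m) ℝ) (M : Matrix (Fin m) (Fin n) ℝ)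
    (hQ : Qᵀ = Q) (hR : Rᵀ = R) (hP : Pᵀ = P)
    (hQ0 : ∀ x, 0 ≤ x ⬝ᵥ (Q *ᵥ x)) (hR0 : ∀ x, 0 ≤ x ⬝ᵥ (R *ᵥ x)) (hP0 : ∀ x, 0 ≤ x ⬝ᵥ (P *ᵥ x))
    (hU : U = Bᵀ * (R + P) * B) (hM : M = Bᵀ * P * A)
    (hP' : P' = Q + Aᵀ * P * A - Mᵀ * Y * M)
    (hrM : U * Y * M = M) :
    P'ᵀ = P' ∧ ∀ x, 0 ≤ x ⬝ᵥ (P' *ᵥ x) := by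
  have hUs : Uᵀ = U := by
    rw [hU]; simp [Matrix.transpose_mul, hR, hP, Matrix.mul_assoc]
  constructor
  · have k1 : Mᵀ * Y * M = Mᵀ * Yᵀ * U * Y * M := by
      conv_lhs => rw [← hrM]
      rw [hrM]
      conv_lhs => 
        enter [1, 1]
        rw [← hrM]
      simp [Matrix.transpose_mul, hUs, Matrix.mul_assoc]
    rw [hP', k1]
    simp [Matrix.transpose_mul, hUs, hQ, hP, Matrix.mul_assoc]
  · intro x
    have key := step_aux A Q R P P' B (0 : Matrix (Fin n) (Fin m) ℝ) U Y M hQ hR hP hU hM hP' 0 x 0 0 0 0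
      (-(Y *ᵥ (M *ᵥ x))) (by simp) (by simp) hrM (by simp)
    simp at key
    have a1 := hQ0 x
    have a2 := hR0 (B *ᵥ (-(Y *ᵥ (M *ᵥ x))))
    have a3 := hP0 (A *ᵥ x + B *ᵥ (-(Y *ᵥ (M *ᵥ x))))
    simp at a2 a3
    linarith

/-- **Finite-horizon optimal controller under the regular condition (Lemma 2).**
If the general difference Riccati equation with pseudo-inverses and terminal value
`P_{N+1} = 0` satisfies the regular condition `Υ_k Υ_k† M_k = M_k` and
`Υ_k Υ_k† h_k = h_k`, then `u_k = −Υ_k† M_k x_k − Υ_k† h_k` minimizes `J_N` and the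
optimal cost equals the stated expression. -/
theorem finite_horizon_controller_pseudoinverse
    (n m N : ℕ)
    (A Q R : Matrix (Fin n) (Fin n) ℝ)
    (B E : Matrix (Fin n) (Fin m) ℝ)
    (r : Fin n → ℝ)
    (hQ : Q.PosSemidef) (hR : R.PosSemidef)
    (P : ℕ → Matrix (Fin n) (Fin n) ℝ)
    (Υ : ℕ → Matrix (Fin m) (Fin m) ℝ)
    (M : ℕ → Matrix (Fin m) (Fin n) ℝ)
    (hPterm : P (N + 1) = 0)
    (hΥ : ∀ k ≤ N, Υ k = Bᵀ * (R + P (k + 1)) * B)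
    (hM : ∀ k ≤ N, M k = Bᵀ * P (k + 1) * A)
    (hP : ∀ k ≤ N, P k = Q + Aᵀ * P (k + 1) * A - (M k)ᵀ * mpinv (Υ k) * M k)
    (d : ℕ → Fin m → ℝ)
    (f : ℕ → Fin n → ℝ) (h : ℕ → Fin m → ℝ)
    (hfterm : f (N + 1) = -(P (N + 1) *ᵥ r))
    (hh : ∀ k ≤ N, h k = (Bᵀ * (R + P (k + 1)) * E) *ᵥ d k + Bᵀ *ᵥ f (k + 1))
    (hf : ∀ k ≤ N, f k = (Aᵀ * P (k + 1) * E) *ᵥ d k + Aᵀ *ᵥ f (k + 1)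
            - (M k)ᵀ *ᵥ (mpinv (Υ k) *ᵥ h k) - Q *ᵥ r)
    -- the regular condition
    (hregM : ∀ k ≤ N, Υ k * mpinv (Υ k) * M k = M k)
    (hregh : ∀ k ≤ N, (Υ k * mpinv (Υ k)) *ᵥ h k = h k)
    -- the cost functional `J_N`
    (J : (ℕ → Fin n → ℝ) → (ℕ → Fin m → ℝ) → ℝ)
    (hJ : ∀ x u, J x u =
        (∑ k ∈ range (N + 1),
          ((x k - r) ⬝ᵥ (Q *ᵥ (x k - r))
            + (B *ᵥ u k + E *ᵥ d k) ⬝ᵥ (R *ᵥ (B *ᵥ u k + E *ᵥ d k))))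
        + (x (N + 1) - r) ⬝ᵥ (P (N + 1) *ᵥ (x (N + 1) - r)))
    -- the closed-loop trajectory generated by the proposed controller
    (x0 : Fin n → ℝ)
    (xs : ℕ → Fin n → ℝ) (us : ℕ → Fin m → ℝ)
    (hxs0 : xs 0 = x0)
    (hus : ∀ k ≤ N, us k = -(mpinv (Υ k) *ᵥ (M k *ᵥ xs k)) - mpinv (Υ k) *ᵥ h k)
    (hxs : ∀ k ≤ N, xs (k + 1) = A *ᵥ xs k + B *ᵥ us k + E *ᵥ d k) :
    (∀ (x : ℕ → Fin n → ℝ) (u : ℕ → Fin m → ℝ),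
        x 0 = x0 → (∀ k ≤ N, x (k + 1) = A *ᵥ x k + B *ᵥ u k + E *ᵥ d k) →
        J xs us ≤ J x u)
    ∧ J xs us
        = x0 ⬝ᵥ (P 0 *ᵥ x0) + 2 * (x0 ⬝ᵥ f 0)
          + ∑ k ∈ range (N + 1),
              (r ⬝ᵥ (Q *ᵥ r)
                + (E *ᵥ d k) ⬝ᵥ ((R + P (k + 1)) *ᵥ (E *ᵥ d k))
                + 2 * ((E *ᵥ d k) ⬝ᵥ f (k + 1))
                - h k ⬝ᵥ (mpinv (Υ k) *ᵥ h k)) := by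
  have nn : ∀ {S : Matrix (Fin n) (Fin n) ℝ}, S.PosSemidef → Sᵀ = S ∧ ∀ x, 0 ≤ x ⬝ᵥ (S *ᵥ x) := by
    intro S hS
    refine ⟨by simpa using hS.isHermitian.eq, fun x => by simpa using hS.dotProduct_mulVec_nonneg x⟩
  obtain ⟨hQs, hQ0⟩ := nn hQ
  obtain ⟨hRs, hR0⟩ := nn hR
  have hPP : ∀ j ≤ N + 1, (P (N + 1 - j))ᵀ = P (N + 1 - j) ∧
      ∀ x, 0 ≤ x ⬝ᵥ (P (N + 1 - j) *ᵥ x) := by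
    intro j
    induction j with
    | zero => intro _; simp [hPterm]
    | succ j ih =>
      intro hj
      obtain ⟨i1, i2⟩ := ih (by omega)
      obtain ⟨k, hk⟩ : ∃ k, k = N + 1 - (j + 1) := ⟨_, rfl⟩
      have hk1 : N + 1 - j = k + 1 := by omega
      have hkN : k ≤ N := by omega
      rw [hk1] at i1 i2
      rw [← hk]
      exact psd_aux A Q R (P (k + 1)) (P k) B (Υ k) (mpinv (Υ k)) (M k) hQs hRs i1 hQ0 hR0 i2
        (hΥ k hkN) (hM k hkN) (hP k hkN) (hregM k hkN)
  have hPP' : ∀ k ≤ N + 1, (P k)ᵀ = P k ∧ ∀ x, 0 ≤ x ⬝ᵥ (P k *ᵥ x) := by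
    intro k hk
    have := hPP (N + 1 - k) (by omega)
    rwa [show N + 1 - (N + 1 - k) = k by omega] at this
  have hcost : ∀ (x : ℕ → Fin n → ℝ) (u : ℕ → Fin m → ℝ), x 0 = x0 →
      (∀ k ≤ N, x (k + 1) = A *ᵥ x k + B *ᵥ u k + E *ᵥ d k) →
      J x u = x0 ⬝ᵥ (P 0 *ᵥ x0) + 2 * (x0 ⬝ᵥ f 0)
          + ∑ k ∈ range (N + 1),
              (r ⬝ᵥ (Q *ᵥ r)
                + (E *ᵥ d k) ⬝ᵥ ((R + P (k + 1)) *ᵥ (E *ᵥ d k))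
                + 2 * ((E *ᵥ d k) ⬝ᵥ f (k + 1))
                - h k ⬝ᵥ (mpinv (Υ k) *ᵥ h k))
          + ∑ k ∈ range (N + 1), (u k + mpinv (Υ k) *ᵥ (M k *ᵥ x k) + mpinv (Υ k) *ᵥ h k) ⬝ᵥ
              (Υ k *ᵥ (u k + mpinv (Υ k) *ᵥ (M k *ᵥ x k) + mpinv (Υ k) *ᵥ h k)) := by
    intro x u hx0 hx
    have tele := Finset.sum_range_sub (fun k => x k ⬝ᵥ (P k *ᵥ x k) + 2 * (x k ⬝ᵥ f k)) (N + 1)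
    have hT : x (N + 1) ⬝ᵥ (P (N + 1) *ᵥ x (N + 1)) + 2 * (x (N + 1) ⬝ᵥ f (N + 1)) = 0 := by
      simp [hfterm, hPterm]
    have hT2 : (x (N + 1) - r) ⬝ᵥ (P (N + 1) *ᵥ (x (N + 1) - r)) = 0 := by simp [hPterm]
    rw [hJ, hT2]
    simp only [hT, hx0] at tele
    have hs : ∀ k ∈ range (N + 1),
        (x k - r) ⬝ᵥ (Q *ᵥ (x k - r)) + (B *ᵥ u k + E *ᵥ d k) ⬝ᵥ (R *ᵥ (B *ᵥ u k + E *ᵥ d k))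
          + x (k + 1) ⬝ᵥ (P (k + 1) *ᵥ x (k + 1)) + 2 * (x (k + 1) ⬝ᵥ f (k + 1))
        = x k ⬝ᵥ (P k *ᵥ x k) + 2 * (x k ⬝ᵥ f k)
          + (r ⬝ᵥ (Q *ᵥ r) + (E *ᵥ d k) ⬝ᵥ ((R + P (k + 1)) *ᵥ (E *ᵥ d k))
            + 2 * ((E *ᵥ d k) ⬝ᵥ f (k + 1)) - h k ⬝ᵥ (mpinv (Υ k) *ᵥ h k))
          + (u k + mpinv (Υ k) *ᵥ (M k *ᵥ x k) + mpinv (Υ k) *ᵥ h k) ⬝ᵥ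
            (Υ k *ᵥ (u k + mpinv (Υ k) *ᵥ (M k *ᵥ x k) + mpinv (Υ k) *ᵥ h k)) := fun k hk => by
      have hkN : k ≤ N := by simpa [Nat.lt_succ_iff] using hk
      have := step_aux A Q R (P (k + 1)) (P k) B E (Υ k) (mpinv (Υ k)) (M k) hQs hRs
        (hPP' (k + 1) (by omega)).1 (hΥ k hkN) (hM k hkN) (hP k hkN) r (x k) (f (k + 1)) (f k)
        (d k) (h k) (u k) (hh k hkN) (hf k hkN) (hregM k hkN) (hregh k hkN)
      rw [← hx k hkN] at this
      exact this
    have hsum := Finset.sum_congr rfl hs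
    simp only [Finset.sum_add_distrib, Finset.sum_sub_distrib] at hsum tele ⊢
    linarith
  have hopt : ∀ k ∈ range (N + 1),
      (us k + mpinv (Υ k) *ᵥ (M k *ᵥ xs k) + mpinv (Υ k) *ᵥ h k) ⬝ᵥ
        (Υ k *ᵥ (us k + mpinv (Υ k) *ᵥ (M k *ᵥ xs k) + mpinv (Υ k) *ᵥ h k)) = 0 := by
    intro k hk
    have hkN : k ≤ N := by simpa [Nat.lt_succ_iff] using hk
    have : us k + mpinv (Υ k) *ᵥ (M k *ᵥ xs k) + mpinv (Υ k) *ᵥ h k = 0 := by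
      rw [hus k hkN]; abel
    rw [this]; simp
  have hstar := hcost xs us hxs0 hxs
  rw [Finset.sum_eq_zero hopt, add_zero] at hstar
  refine ⟨fun x u hx0 hx => ?_, hstar⟩
  rw [hstar, hcost x u hx0 hx]
  refine le_add_of_nonneg_right (Finset.sum_nonneg fun k hk => ?_)
  have hkN : k ≤ N := by simpa [Nat.lt_succ_iff] using hk
  generalize u k + mpinv (Υ k) *ᵥ (M k *ᵥ x k) + mpinv (Υ k) *ᵥ h k = z
  rw [hΥ k hkN]
  simp only [← mulVec_mulVec, tr_aux, add_mulVec, dotProduct_add]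
  exact add_nonneg (hR0 _) ((hPP' (k + 1) (by omega)).2 _)
end

section
/- Suppose Q, R, P_{N+1} ∈ ℝ^{n×n} are positive semidefinite. If there exist sequences (x_k)_{k=0}^{N+1}, (u_k)_{k=0}^{N}, (λ_k)_{k=0}^{N} satisfying the forward–backward difference equations 0 = B'R B u_k + B'λ_k + B'R E d_k, λ_{k-1} = Q(x_k − r) + A'λ_k, x_{k+1} = A x_k + B u_k + E d_k, λ_N = P_{N+1}(x_{N+1} − r), then the control sequence (u_k) minimizes the cost J_N over all control sequences driving the system from the same initial state x_0 with the same disturbances (d_k). -/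
open Matrix Finset

lemma psd_tangent {n : ℕ} {M : Matrix (Fin n) (Fin n) ℝ} (hM : M.PosSemidef) (v w : Fin n → ℝ) :
    v ⬝ᵥ (M *ᵥ v) + 2 * ((w - v) ⬝ᵥ (M *ᵥ v)) ≤ w ⬝ᵥ (M *ᵥ w) := by
  have h := hM.dotProduct_mulVec_nonneg (w - v)
  have ht : Mᵀ = M := by simpa using hM.isHermitian.eq
  have hs : v ⬝ᵥ (M *ᵥ w) = w ⬝ᵥ (M *ᵥ v) := by
    rw [dotProduct_mulVec, ← mulVec_transpose, ht, dotProduct_comm]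
  simp only [star_trivial, mulVec_sub, sub_dotProduct, dotProduct_sub] at h ⊢
  linarith

/-- **Sufficiency of the forward–backward difference equations (from Lemma 1).**
If sequences `(x_k)`, `(u_k)`, `(λ_k)` satisfy the FBDEs of the maximum principle,
then the control `(u_k)` minimizes the cost `J_N` over all control sequences driving
the system from the same initial state with the same disturbances. -/
theorem FBDE_implies_optimality
    (n m N : ℕ)
    (A Q R : Matrix (Fin n) (Fin n) ℝ)
    (B E : Matrix (Fin n) (Fin m) ℝ)
    (r : Fin n → ℝ)
    (PN1 : Matrix (Fin n) (Fin n) ℝ)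
    (hQ : Q.PosSemidef) (hR : R.PosSemidef) (hPN1 : PN1.PosSemidef)
    (d : ℕ → Fin m → ℝ)
    -- the cost functional `J_N`
    (J : (ℕ → Fin n → ℝ) → (ℕ → Fin m → ℝ) → ℝ)
    (hJ : ∀ x u, J x u =
        (∑ k ∈ range (N + 1),
          ((x k - r) ⬝ᵥ (Q *ᵥ (x k - r))
            + (B *ᵥ u k + E *ᵥ d k) ⬝ᵥ (R *ᵥ (B *ᵥ u k + E *ᵥ d k))))
        + (x (N + 1) - r) ⬝ᵥ (PN1 *ᵥ (x (N + 1) - r)))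
    -- sequences satisfying the FBDEs
    (x : ℕ → Fin n → ℝ) (u : ℕ → Fin m → ℝ) (lam : ℕ → Fin n → ℝ)
    (hstat : ∀ k ≤ N, 0 = (Bᵀ * R * B) *ᵥ u k + Bᵀ *ᵥ lam k + (Bᵀ * R * E) *ᵥ d k)
    (hcostate : ∀ k, 1 ≤ k → k ≤ N → lam (k - 1) = Q *ᵥ (x k - r) + Aᵀ *ᵥ lam k)
    (hdyn : ∀ k ≤ N, x (k + 1) = A *ᵥ x k + B *ᵥ u k + E *ᵥ d k)
    (hterm : lam N = PN1 *ᵥ (x (N + 1) - r)) :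
    ∀ (x' : ℕ → Fin n → ℝ) (u' : ℕ → Fin m → ℝ),
      x' 0 = x 0 →
      (∀ k ≤ N, x' (k + 1) = A *ᵥ x' k + B *ᵥ u' k + E *ᵥ d k) →
      J x u ≤ J x' u' := by
  intro x' u' h0 hdyn'
  have hw : ∀ k ≤ N, ((B *ᵥ u' k + E *ᵥ d k) - (B *ᵥ u k + E *ᵥ d k)) ⬝ᵥ
      (R *ᵥ (B *ᵥ u k + E *ᵥ d k)) = - ((B *ᵥ (u' k - u k)) ⬝ᵥ lam k) := by
    intro k hk
    have h := congrArg (fun z => (u' k - u k) ⬝ᵥ z) (hstat k hk)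
    have e : ∀ z : Fin n → ℝ, (u' k - u k) ⬝ᵥ (Bᵀ *ᵥ z) = (B *ᵥ (u' k - u k)) ⬝ᵥ z := by
      intro z
      rw [dotProduct_mulVec, vecMul_transpose]
    simp only [Matrix.mul_assoc, ← mulVec_mulVec, dotProduct_add, dotProduct_zero, e] at h
    rw [add_sub_add_right_eq_sub, ← mulVec_sub, mulVec_add, dotProduct_add]
    linarith
  have hd : ∀ k ≤ N, (x' (k + 1) - x (k + 1)) ⬝ᵥ lam k
      = (x' k - x k) ⬝ᵥ (Aᵀ *ᵥ lam k) + (B *ᵥ (u' k - u k)) ⬝ᵥ lam k := by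
    intro k hk
    rw [hdyn k hk, hdyn' k hk, dotProduct_mulVec, vecMul_transpose, ← add_dotProduct]
    congr 1
    rw [mulVec_sub, mulVec_sub]
    abel
  have key : ∀ K ≤ N, (∑ k ∈ range (K + 1),
          ((x k - r) ⬝ᵥ (Q *ᵥ (x k - r))
            + (B *ᵥ u k + E *ᵥ d k) ⬝ᵥ (R *ᵥ (B *ᵥ u k + E *ᵥ d k))))
      ≤ (∑ k ∈ range (K + 1),
          ((x' k - r) ⬝ᵥ (Q *ᵥ (x' k - r))
            + (B *ᵥ u' k + E *ᵥ d k) ⬝ᵥ (R *ᵥ (B *ᵥ u' k + E *ᵥ d k))))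
        + 2 * ((x' (K + 1) - x (K + 1)) ⬝ᵥ lam K) := by
    intro K
    induction K with
    | zero =>
      intro hK
      have h1 := psd_tangent hR (B *ᵥ u 0 + E *ᵥ d 0) (B *ᵥ u' 0 + E *ᵥ d 0)
      rw [hw 0 hK] at h1
      rw [hd 0 hK]
      simp only [zero_add, sum_range_one, h0, sub_self, zero_dotProduct]
      linarith
    | succ K ih =>
      intro hK
      have ih := ih (by omega)
      have h1 := psd_tangent hR (B *ᵥ u (K+1) + E *ᵥ d (K+1)) (B *ᵥ u' (K+1) + E *ᵥ d (K+1))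
      have h2 := psd_tangent hQ (x (K+1) - r) (x' (K+1) - r)
      rw [hw _ hK] at h1
      rw [sub_sub_sub_cancel_right] at h2
      have hc := hcostate (K+1) (by omega) hK
      rw [Nat.add_sub_cancel] at hc
      rw [hc, dotProduct_add] at ih
      rw [hd _ hK, sum_range_succ _ (K+1), sum_range_succ _ (K+1)]
      linarith
  have hk := key N le_rfl
  have h2 := psd_tangent hPN1 (x (N+1) - r) (x' (N+1) - r)
  rw [sub_sub_sub_cancel_right] at h2
  rw [hterm] at hk
  rw [hJ, hJ]
  linarith
end

section
/- Suppose Υ_{k} is positive definite and along a trajectory of the system the control at time k equals u_k = −Υ_k^{-1}M_k x_k − Υ_k^{-1}h_k while the costate satisfies λ_k = P_{k+1}x_{k+1} + f_{k+1}. Then the adjoint update λ_{k-1} := Q(x_k − r) + A'λ_k satisfies λ_{k-1} = P_k x_k + f_k, where P_k = Q + A'P_{k+1}A − M_k'Υ_k^{-1}M_k and f_k = A'P_{k+1}E d_k + A'f_{k+1} − M_k'Υ_k^{-1}h_k − Q r. -/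
open Matrix

/-- **Costate update identity (equation (16)/(22) of the paper).**
If `Υ = B'(R+P_{k+1})B` is positive definite, the control equals
`u_k = −Υ⁻¹M x_k − Υ⁻¹h` and the costate satisfies `λ_k = P_{k+1}x_{k+1} + f_{k+1}`,
then `λ_{k-1} := Q(x_k − r) + A'λ_k = P_k x_k + f_k`, with `P_k` given by the Riccati
step and `f_k` by the backward feedforward recursion. -/
theorem costate_update_identity
    (n m : ℕ)
    (A Q R : Matrix (Fin n) (Fin n) ℝ)
    (B E : Matrix (Fin n) (Fin m) ℝ)
    (r : Fin n → ℝ)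
    (hQ : Q.PosSemidef) (hR : R.PosSemidef)
    -- data at time `k`: `P_{k+1}`, `f_{k+1}`, `d_k`, state, control, costate
    (Pk1 : Matrix (Fin n) (Fin n) ℝ) (hPk1 : Pk1.PosSemidef)
    (fk1 : Fin n → ℝ) (dk : Fin m → ℝ)
    (Υ : Matrix (Fin m) (Fin m) ℝ) (M : Matrix (Fin m) (Fin n) ℝ)
    (hΥ : Υ = Bᵀ * (R + Pk1) * B)
    (hM : M = Bᵀ * Pk1 * A)
    (hΥpos : Υ.PosDef)
    (hk : Fin m → ℝ)
    (hhk : hk = (Bᵀ * (R + Pk1) * E) *ᵥ dk + Bᵀ *ᵥ fk1)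
    (xk : Fin n → ℝ) (uk : Fin m → ℝ) (xk1 : Fin n → ℝ) (lamk : Fin n → ℝ)
    (huk : uk = -(Υ⁻¹ *ᵥ (M *ᵥ xk)) - Υ⁻¹ *ᵥ hk)
    (hxk1 : xk1 = A *ᵥ xk + B *ᵥ uk + E *ᵥ dk)
    (hlamk : lamk = Pk1 *ᵥ xk1 + fk1)
    -- `P_k` and `f_k` from the backward recursions
    (Pk : Matrix (Fin n) (Fin n) ℝ)
    (hPk : Pk = Q + Aᵀ * Pk1 * A - Mᵀ * Υ⁻¹ * M)
    (fk : Fin n → ℝ)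
    (hfk : fk = (Aᵀ * Pk1 * E) *ᵥ dk + Aᵀ *ᵥ fk1 - Mᵀ *ᵥ (Υ⁻¹ *ᵥ hk) - Q *ᵥ r) :
    Q *ᵥ (xk - r) + Aᵀ *ᵥ lamk = Pk *ᵥ xk + fk := by
  have hP : Pk1ᵀ = Pk1 := by
    have h := hPk1.isHermitian.eq
    rwa [conjTranspose_eq_transpose_of_trivial] at h
  have hMt : Mᵀ = Aᵀ * Pk1 * B := by
    rw [hM, transpose_mul, transpose_mul, transpose_transpose, hP, Matrix.mul_assoc]
  rw [hPk, hfk, hlamk, hxk1, huk, hMt]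
  simp only [mulVec_add, mulVec_sub, mulVec_neg, add_mulVec, sub_mulVec, ← mulVec_mulVec]
  abel
end
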